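/- For every integer n ≥ 4, the largest prime factor of g(n) satisfies P⁺(g(n)) / √(n·log n) ≤ 43 / √(215·log 215) = 1.26542463…; equivalently, P⁺(g(n))·√(215·log 215) ≤ 43·√(n·log n) (the maximum of P⁺(g(n))/√(n log n) over n ≥ 4 is attained at n = 215, where P⁺(g(215)) = 43). -/

import Mathlib

/-- Landau's function: the maximal order of a permutation of the symmetric group on `n` letters. -/
noncomputable def landau (n : ℕ) : ℕ :=
  Finset.univ.sup fun σ : Equiv.Perm (Fin n) => orderOf σ

/-- The largest prime factor of `m` (0 if `m` has no prime factor). -/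
def maxPrimeFac (m : ℕ) : ℕ := m.primeFactors.sup id

/-!
The orders of the permutations of `n` letters are the numbers `M` for which the sum `ℓ(M)` of the
maximal prime powers dividing `M` is at most `n`. Let `P` be a prime divisor of `N = g(n)`. If two
primes `q₁ < q₂` above `√P` do not divide `N`, then `P < q₁ + q₂`: otherwise `N q₁ q₂ / P` would be
a larger order. If `p` is a prime with `q₁ + q₂ ≤ p + P` and `p P < q₁ q₂`, then `p` does not divide
`N` either: otherwise `N q₁ q₂ / (p P)` would be a larger order. As `p < q₁`, this is an infinite
descent if such a prime `p > √P` exists for all `q₁` and `q₂` up to some `t < P`, and hence `N` is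
divisible by all primes in `(√P, t]` but at most one, so that `n` is at least the sum of these
primes. With `t ≈ 0.87 P` this bound on `n` is of the order `P² / (2.64 log P)`, while the claim
only requires about `P² / (3.2 log P)`.

For `P ≥ 2004328` the primes `p` and the sum of the primes up to `t` are supplied by Chebyshev's
method, with combinations of factorials found by linear programming. For `468 ≤ P < 2004328` they
are computed, with a sieve and with the exchange condition checked on whole intervals of `P`. For
`P < 468` the inequality can only fail for `n` below an explicit bound, and there a dynamic
program for the largest order without prime factors `≥ b` shows that `P` is not the largest prime
factor of `g(n)`. Vectors are packed into single natural numbers, on which the kernel computes fast.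
-/

/-! ### Vectors packed into one natural number -/

/-- Continuation passing with an argument that is matched on first, so that the kernel evaluates
`x` to a literal before it unfolds `k`. -/
def force {α : Sort*} (x : ℕ) (k : ℕ → α) : α :=
  match x with
  | 0 => k 0
  | x + 1 => k (x + 1)

theorem force_eq {α : Sort*} (x : ℕ) (k : ℕ → α) : force x k = k x := by
  cases x <;> rfl

/-- The vector `(f 0, …, f (n - 1))` as the number with these digits in base `2 ^ w`. One
arithmetic operation on such numbers acts on all coordinates at once. -/
def pack (w : ℕ) (f : ℕ → ℕ) (n : ℕ) : ℕ := ∑ i ∈ Finset.range n, f i * 2 ^ (w * i)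

section Pack

variable {w n : ℕ} {f g : ℕ → ℕ}

theorem pack_succ (w : ℕ) (f : ℕ → ℕ) (n : ℕ) :
    pack w f (n + 1) = pack w f n + f n * 2 ^ (w * n) :=
  Finset.sum_range_succ _ _

theorem pack_congr (h : ∀ i < n, f i = g i) : pack w f n = pack w g n :=
  Finset.sum_congr rfl fun i hi => by rw [h i (Finset.mem_range.1 hi)]

theorem pack_zero (w n : ℕ) : pack w (fun _ => 0) n = 0 := by simp [pack]

theorem pack_add (w : ℕ) (f g : ℕ → ℕ) (n : ℕ) :
    pack w (fun i => f i + g i) n = pack w f n + pack w g n := by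
  simp [pack, add_mul, Finset.sum_add_distrib]

theorem pack_mul (w c : ℕ) (f : ℕ → ℕ) (n : ℕ) :
    pack w (fun i => c * f i) n = c * pack w f n := by
  simp [pack, Finset.mul_sum, mul_assoc]

theorem pack_sub (h : ∀ i < n, g i ≤ f i) :
    pack w (fun i => f i - g i) n = pack w f n - pack w g n := by
  have hfg : pack w f n = pack w (fun i => (f i - g i) + g i) n :=
    pack_congr fun i hi => (Nat.sub_add_cancel (h i hi)).symm
  rw [hfg, pack_add, Nat.add_sub_cancel]

theorem pack_append (w : ℕ) (f : ℕ → ℕ) (m n : ℕ) :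
    pack w f (m + n) = pack w f m + 2 ^ (w * m) * pack w (fun i => f (m + i)) n := by
  simp only [pack, Finset.sum_range_add, Finset.mul_sum]
  congr 1
  refine Finset.sum_congr rfl fun i _ => ?_
  rw [Nat.mul_add, pow_add]
  ring

theorem pack_lt (h : ∀ i < n, f i < 2 ^ w) : pack w f n < 2 ^ (w * n) := by
  induction n with
  | zero => simp [pack]
  | succ n ih =>
    calc pack w f (n + 1) < 2 ^ (w * n) + f n * 2 ^ (w * n) := by
          rw [pack_succ]
          exact Nat.add_lt_add_right (ih fun i hi => h i (by omega)) _
      _ = (f n + 1) * 2 ^ (w * n) := by ring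
      _ ≤ 2 ^ w * 2 ^ (w * n) := Nat.mul_le_mul_right _ (h n (Nat.lt_succ_self n))
      _ = 2 ^ (w * (n + 1)) := by rw [← pow_add]; ring_nf

theorem pack_mod {m : ℕ} (hf : ∀ i < n, f i < 2 ^ w) (hm : m ≤ n) :
    pack w f n % 2 ^ (w * m) = pack w f m := by
  obtain ⟨k, rfl⟩ := Nat.exists_eq_add_of_le hm
  rw [pack_append, Nat.add_mul_mod_self_left,
    Nat.mod_eq_of_lt (pack_lt fun i hi => hf i (by omega))]

theorem pack_div {m : ℕ} (hf : ∀ i < n, f i < 2 ^ w) (hm : m ≤ n) :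
    pack w f n / 2 ^ (w * m) = pack w (fun i => f (m + i)) (n - m) := by
  obtain ⟨k, rfl⟩ := Nat.exists_eq_add_of_le hm
  rw [pack_append, Nat.add_mul_div_left _ _ (by positivity),
    Nat.div_eq_of_lt (pack_lt fun i hi => hf i (by omega)), zero_add, Nat.add_sub_cancel_left]

theorem pack_digit {i : ℕ} (hf : ∀ i < n, f i < 2 ^ w) (hi : i < n) :
    pack w f n / 2 ^ (w * i) % 2 ^ w = f i := by
  have htail : ∀ j < n - i, f (i + j) < 2 ^ w := fun j hj => hf _ (by omega)
  have hmod := pack_mod htail (show 1 ≤ n - i by omega)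
  rw [mul_one] at hmod
  rw [pack_div hf hi.le, hmod]
  simp [pack]

theorem pack_inj (hf : ∀ i < n, f i < 2 ^ w) (hg : ∀ i < n, g i < 2 ^ w)
    (h : pack w f n = pack w g n) {i : ℕ} (hi : i < n) : f i = g i := by
  rw [← pack_digit hf hi, h, pack_digit hg hi]

theorem testBit_pack {i j : ℕ} (hf : ∀ i < n, f i < 2 ^ w) (hi : i < n) (hj : j < w) :
    (pack w f n).testBit (w * i + j) = (f i).testBit j := by
  rw [← pack_digit hf hi, Nat.testBit_mod_two_pow, Nat.testBit_div_two_pow]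
  simp [hj, Nat.add_comm]

theorem eq_pack_of_testBit {a : ℕ} (hw : 0 < w) (hf : ∀ i < n, f i < 2 ^ w)
    (ha : a < 2 ^ (w * n)) (h : ∀ i < n, ∀ j < w, a.testBit (w * i + j) = (f i).testBit j) :
    a = pack w f n := by
  refine Nat.eq_of_testBit_eq fun k => ?_
  by_cases hk : k < w * n
  · have hi : k / w < n := Nat.div_lt_of_lt_mul hk
    have hj : k % w < w := Nat.mod_lt _ hw
    rw [← Nat.div_add_mod k w, h _ hi _ hj, testBit_pack hf hi hj]
  · have hpow : 2 ^ (w * n) ≤ 2 ^ k := Nat.pow_le_pow_right two_pos (not_lt.1 hk)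
    rw [Nat.testBit_lt_two_pow (ha.trans_le hpow),
      Nat.testBit_lt_two_pow ((pack_lt hf).trans_le hpow)]

theorem pack_land (hw : 0 < w) (hf : ∀ i < n, f i < 2 ^ w) (hg : ∀ i < n, g i < 2 ^ w) :
    pack w f n &&& pack w g n = pack w (fun i => f i &&& g i) n := by
  refine eq_pack_of_testBit hw (fun i hi => Nat.and_lt_two_pow _ (hg i hi))
    (Nat.and_lt_two_pow _ (pack_lt hg)) fun i hi j hj => ?_
  rw [Nat.testBit_and, Nat.testBit_and, testBit_pack hf hi hj, testBit_pack hg hi hj]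

theorem pack_mod_two_pow_sub_one_le (w : ℕ) (f : ℕ → ℕ) (n : ℕ) :
    pack w f n % (2 ^ w - 1) ≤ ∑ i ∈ Finset.range n, f i := by
  have hbase : 2 ^ w ≡ 1 [MOD 2 ^ w - 1] :=
    ((Nat.modEq_iff_dvd' Nat.one_le_two_pow).2 dvd_rfl).symm
  have hsum : pack w f n ≡ ∑ i ∈ Finset.range n, f i [MOD 2 ^ w - 1] := by
    refine Nat.ModEq.sum fun i _ => ?_
    simpa only [one_pow, mul_one, ← pow_mul] using (hbase.pow i).mul_left (f i)
  rw [hsum]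
  exact Nat.mod_le _ _

/-- The packed constant vector `(1, …, 1)` of length `n`, in closed form. -/
def packOnes (w n : ℕ) : ℕ := (2 ^ (w * n) - 1) / (2 ^ w - 1)

theorem pack_const (hw : 0 < w) (c n : ℕ) : pack w (fun _ => c) n = c * packOnes w n := by
  have hbase : 2 ≤ 2 ^ w := Nat.le_self_pow hw.ne' 2
  rw [packOnes, pow_mul, ← Nat.geomSum_eq hbase n, Finset.mul_sum]
  simp only [pack, pow_mul]

theorem pack_one (hw : 0 < w) (n : ℕ) : pack w (fun _ => 1) n = packOnes w n := by
  rw [pack_const hw, one_mul]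

/-- The coordinatewise maximum of two vectors with entries below `2 ^ w`, packed in words of
`w + 1` bits: adding the guard bits `2 ^ w` to `X` makes the subtraction of `Y` borrow-free, and
the guard bits that survive mark the coordinates where `X` is the larger. -/
def packMax (w n X Y : ℕ) : ℕ :=
  force (2 ^ w * packOnes (w + 1) n) fun guard =>
    force (X + guard - Y) fun diff =>
      force (diff &&& guard) fun wins => Y + (diff &&& (wins - wins >>> w))

theorem land_two_pow_eq_ite {d : ℕ} (hd : d < 2 ^ (w + 1)) :
    d &&& 2 ^ w = if 2 ^ w ≤ d then 2 ^ w else 0 := by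
  rw [Nat.and_two_pow]
  split_ifs with h
  · have hdiv : d / 2 ^ w = 1 :=
      Nat.div_eq_of_lt_le (by omega) (by rw [pow_succ] at hd; omega)
    simp [Nat.testBit_eq_decide_div_mod_eq, hdiv]
  · simp [Nat.testBit_lt_two_pow (not_le.1 h)]

theorem pack_add_guard_sub (hg : ∀ i < n, g i < 2 ^ w) :
    pack (w + 1) f n + 2 ^ w * packOnes (w + 1) n - pack (w + 1) g n
      = pack (w + 1) (fun i => f i + 2 ^ w - g i) n := by
  rw [pack_sub fun i hi => (hg i hi).le.trans (Nat.le_add_left _ _), pack_add,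
    pack_const w.succ_pos]

theorem pack_diff_land_guard (hf : ∀ i < n, f i < 2 ^ w) (hg : ∀ i < n, g i < 2 ^ w) :
    pack (w + 1) (fun i => f i + 2 ^ w - g i) n &&& 2 ^ w * packOnes (w + 1) n
      = 2 ^ w * pack (w + 1) (fun i => if g i ≤ f i then 1 else 0) n := by
  have hpos : 0 < 2 ^ w := by positivity
  rw [← pack_const w.succ_pos, pack_land w.succ_pos (fun i hi => by have := hf i hi; omega)
    (fun i _ => by omega), ← pack_mul]
  refine pack_congr fun i hi => ?_
  have hfi := hf i hi
  have hgi := hg i hi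
  rw [land_two_pow_eq_ite (by omega)]
  split_ifs <;> omega

theorem pack_wins_sub_shiftRight (w n : ℕ) (s : ℕ → Prop) [DecidablePred s] :
    2 ^ w * pack (w + 1) (fun i => if s i then 1 else 0) n
        - (2 ^ w * pack (w + 1) (fun i => if s i then 1 else 0) n) >>> w
      = pack (w + 1) (fun i => if s i then 2 ^ w - 1 else 0) n := by
  rw [Nat.shiftRight_eq_div_pow, Nat.mul_div_cancel_left _ (by positivity), ← Nat.sub_one_mul,
    ← pack_mul]
  exact pack_congr fun i _ => by split_ifs <;> simp

theorem packMax_eq (hf : ∀ i < n, f i < 2 ^ w) (hg : ∀ i < n, g i < 2 ^ w) :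
    packMax w n (pack (w + 1) f n) (pack (w + 1) g n)
      = pack (w + 1) (fun i => max (f i) (g i)) n := by
  have hpos : 0 < 2 ^ w := by positivity
  rw [packMax, force_eq, force_eq, force_eq, pack_add_guard_sub hg, pack_diff_land_guard hf hg,
    pack_wins_sub_shiftRight, pack_land w.succ_pos (fun i hi => by have := hf i hi; omega)
      (fun i _ => by split_ifs <;> omega), ← pack_add]
  refine pack_congr fun i hi => ?_
  have hfi := hf i hi
  split_ifs with h
  · rw [Nat.and_two_pow_sub_one_eq_mod, max_eq_left h, Nat.sub_add_comm h, Nat.add_mod_right,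
      Nat.mod_eq_of_lt (by omega), Nat.add_sub_cancel' h]
  · rw [Nat.and_zero, add_zero, max_eq_right (not_le.1 h).le]

end Pack

/-! ### Landau's function and the exchange argument -/

/-- The function `ℓ` of Landau's theory: `ℓ(N)` is the sum of the maximal prime powers dividing
`N`, that is, the least degree in which a permutation has order `N`. -/
def ell (N : ℕ) : ℕ := N.factorization.sum fun p k => p ^ k

theorem ell_mul_of_coprime {a b : ℕ} (h : a.Coprime b) : ell (a * b) = ell a + ell b := by
  rw [ell, Nat.factorization_mul_of_coprime h]
  exact Finsupp.sum_add_index_of_disjoint h.disjoint_primeFactors _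

theorem ell_one : ell 1 = 0 := by simp [ell]

theorem ell_prime_pow {p k : ℕ} (hp : p.Prime) (hk : k ≠ 0) : ell (p ^ k) = p ^ k := by
  simp [ell, hp.factorization_pow, Finsupp.sum, Finsupp.support_single, hk]

theorem ell_prime_pow_mul {p k M : ℕ} (hp : p.Prime) (hk : k ≠ 0) (h : ¬p ∣ M) :
    ell (p ^ k * M) = p ^ k + ell M := by
  rw [ell_mul_of_coprime (((Nat.Prime.coprime_iff_not_dvd hp).2 h).pow_left k), ell_prime_pow hp hk]

theorem ell_mul_prime {q M : ℕ} (hq : q.Prime) (h : ¬q ∣ M) : ell (M * q) = ell M + q := by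
  have hmul := ell_prime_pow_mul hq one_ne_zero h
  rwa [pow_one, mul_comm, add_comm] at hmul

theorem ell_le_self {N : ℕ} (hN : N ≠ 0) : ell N ≤ N := by
  induction N using Nat.recOnPosPrimePosCoprime with
  | zero => exact absurd rfl hN
  | one => simp [ell]
  | prime_pow p k hp hk => rw [ell_prime_pow hp hk.ne']
  | coprime a b ha hb hab iha ihb =>
    rw [ell_mul_of_coprime hab]
    have := iha (by omega)
    have := ihb (by omega)
    nlinarith

theorem ell_le_of_dvd {a b : ℕ} (hb : b ≠ 0) (h : a ∣ b) : ell a ≤ ell b := by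
  have hfac := (Nat.factorization_le_iff_dvd (ne_zero_of_dvd_ne_zero hb h) hb).2 h
  calc ell a ≤ ∑ p ∈ a.primeFactors, p ^ b.factorization p :=
        Finset.sum_le_sum fun p hp =>
          Nat.pow_le_pow_right (Nat.prime_of_mem_primeFactors hp).pos (hfac p)
    _ ≤ ell b := Finset.sum_le_sum_of_subset (Nat.primeFactors_mono h hb)

theorem ell_lcm_le {a b : ℕ} (ha : a ≠ 0) (hb : b ≠ 0) : ell (a.lcm b) ≤ ell a + ell b := by
  rw [← Nat.factorizationLCMLeft_mul_factorizationLCMRight ha hb,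
    ell_mul_of_coprime (Nat.coprime_factorizationLCMLeft_factorizationLCMRight a b)]
  exact add_le_add (ell_le_of_dvd ha (Nat.factorizationLCMLeft_dvd_left a b))
    (ell_le_of_dvd hb (Nat.factorizationLCMRight_dvd_right a b))

theorem multiset_lcm_ne_zero {s : Multiset ℕ} (h : ∀ x ∈ s, x ≠ 0) : s.lcm ≠ 0 :=
  fun h0 => h 0 ((Multiset.lcm_eq_zero_iff s).1 h0) rfl

theorem ell_multiset_lcm_le {s : Multiset ℕ} (h : ∀ x ∈ s, x ≠ 0) : ell s.lcm ≤ s.sum := by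
  induction s using Multiset.induction_on with
  | empty => simp [ell]
  | cons a s ih =>
    have hs : ∀ x ∈ s, x ≠ 0 := fun x hx => h x (Multiset.mem_cons_of_mem hx)
    have ha := h a (Multiset.mem_cons_self a s)
    rw [Multiset.lcm_cons, Multiset.sum_cons]
    exact (ell_lcm_le ha (multiset_lcm_ne_zero hs)).trans (add_le_add (ell_le_self ha) (ih hs))

theorem exists_orderOf_eq_landau (n : ℕ) : ∃ σ : Equiv.Perm (Fin n), orderOf σ = landau n := by
  obtain ⟨σ, -, hσ⟩ := Finset.exists_mem_eq_sup (Finset.univ : Finset (Equiv.Perm (Fin n)))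
    Finset.univ_nonempty (fun σ => orderOf σ)
  exact ⟨σ, hσ.symm⟩

theorem landau_ne_zero (n : ℕ) : landau n ≠ 0 := by
  obtain ⟨σ, hσ⟩ := exists_orderOf_eq_landau n
  exact hσ ▸ (orderOf_pos σ).ne'

theorem ell_landau_le (n : ℕ) : ell (landau n) ≤ n := by
  obtain ⟨σ, hσ⟩ := exists_orderOf_eq_landau n
  rw [← hσ, ← Equiv.Perm.lcm_cycleType]
  calc ell σ.cycleType.lcm ≤ σ.cycleType.sum :=
        ell_multiset_lcm_le fun x hx => by
          have := Equiv.Perm.two_le_of_mem_cycleType hx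
          omega
    _ ≤ n := by simpa using σ.sum_cycleType_le

theorem dvd_multiset_lcm_of_prime_powers {M : ℕ} (hM : M ≠ 0) :
    M ∣ (M.primeFactors.val.map fun p => p ^ M.factorization p).lcm := by
  conv_lhs => rw [← Nat.prod_factorization_pow_eq_self hM]
  refine Finset.prod_dvd_of_isRelPrime (fun p hp q hq hpq => ?_) fun p hp =>
    Multiset.dvd_lcm (Multiset.mem_map.2 ⟨p, hp, rfl⟩)
  exact Nat.coprime_iff_isRelPrime.1 (Nat.Coprime.pow _ _ ((Nat.coprime_primes
    (Nat.prime_of_mem_primeFactors hp) (Nat.prime_of_mem_primeFactors hq)).2 hpq))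

theorem le_landau {n M : ℕ} (hM : M ≠ 0) (h : ell M ≤ n) : M ≤ landau n := by
  classical
  have htwo : ∀ a ∈ M.primeFactors.val.map fun p => p ^ M.factorization p, 2 ≤ a := by
    intro a ha
    obtain ⟨p, hp, rfl⟩ := Multiset.mem_map.1 ha
    have hpp := Nat.prime_of_mem_primeFactors hp
    exact hpp.two_le.trans (Nat.le_self_pow
      (hpp.factorization_pos_of_dvd hM (Nat.dvd_of_mem_primeFactors hp)).ne' p)
  obtain ⟨σ, hσ⟩ := (Equiv.Perm.exists_with_cycleType_iff (α := Fin n)).2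
    ⟨by rw [Fintype.card_fin]; exact h, htwo⟩
  have hdvd : M ∣ orderOf σ := by
    rw [← Equiv.Perm.lcm_cycleType, hσ]
    exact dvd_multiset_lcm_of_prime_powers hM
  exact (Nat.le_of_dvd (orderOf_pos σ) hdvd).trans
    (Finset.le_sup (f := fun σ : Equiv.Perm (Fin n) => orderOf σ) (Finset.mem_univ σ))

theorem lt_ell_of_landau_lt {n M : ℕ} (h : landau n < M) : n < ell M :=
  not_le.1 fun hle => absurd (le_landau (by omega) hle) (not_le.2 h)

theorem maxPrimeFac_prime {N : ℕ} (hN : 2 ≤ N) : (maxPrimeFac N).Prime := by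
  obtain ⟨p, hp, hs⟩ := Finset.exists_mem_eq_sup _ (Nat.nonempty_primeFactors.2 hN) id
  rw [maxPrimeFac, hs]
  exact Nat.prime_of_mem_primeFactors hp

theorem maxPrimeFac_dvd {N : ℕ} (hN : 2 ≤ N) : maxPrimeFac N ∣ N := by
  obtain ⟨p, hp, hs⟩ := Finset.exists_mem_eq_sup _ (Nat.nonempty_primeFactors.2 hN) id
  rw [maxPrimeFac, hs]
  exact Nat.dvd_of_mem_primeFactors hp

theorem le_maxPrimeFac {N p : ℕ} (hN : N ≠ 0) (hp : p.Prime) (h : p ∣ N) : p ≤ maxPrimeFac N :=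
  Finset.le_sup (f := id) (Nat.mem_primeFactors.2 ⟨hp, h, hN⟩)

theorem ell_add_prime_le {p K : ℕ} (hp : p.Prime) (hK : K ≠ 0) : ell K + p ≤ ell (p * K) := by
  obtain ⟨k, M, hM, rfl⟩ := Nat.exists_eq_pow_mul_and_not_dvd hK p hp.ne_one
  rw [← mul_assoc, ← pow_succ', ell_prime_pow_mul hp k.succ_ne_zero hM]
  rcases Nat.eq_zero_or_pos k with rfl | hk
  · simp [add_comm]
  · rw [ell_prime_pow_mul hp hk.ne' hM, pow_succ]
    have hle : p ≤ p ^ k := Nat.le_self_pow hk.ne' p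
    nlinarith [hp.two_le]

theorem lt_ell_add_of_lt_mul {n D K q₁ q₂ : ℕ} (hN : landau n = D * K) (h₁ : q₁.Prime)
    (h₂ : q₂.Prime) (hne : q₁ ≠ q₂) (h₁N : ¬q₁ ∣ landau n) (h₂N : ¬q₂ ∣ landau n)
    (hD : D < q₁ * q₂) : n < ell K + (q₁ + q₂) := by
  have hK : 0 < K := Nat.pos_of_ne_zero fun h => landau_ne_zero n (by rw [hN, h, mul_zero])
  have h₁K : ¬q₁ ∣ K := fun h => h₁N (hN ▸ h.mul_left D)
  have h₂K : ¬q₂ ∣ K * q₁ := fun h =>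
    (h₂.dvd_mul.1 h).elim (fun h => h₂N (hN ▸ h.mul_left D))
      fun h => hne ((Nat.prime_dvd_prime_iff_eq h₂ h₁).1 h).symm
  have hlt : landau n < K * q₁ * q₂ := by
    rw [hN, mul_assoc, mul_comm D]
    exact Nat.mul_lt_mul_of_pos_left hD hK
  simpa only [ell_mul_prime h₂ h₂K, ell_mul_prime h₁ h₁K, add_assoc] using lt_ell_of_landau_lt hlt

theorem lt_add_of_lt_mul {n P q₁ q₂ : ℕ} (hP : P.Prime) (hPN : P ∣ landau n) (h₁ : q₁.Prime)
    (h₂ : q₂.Prime) (hne : q₁ ≠ q₂) (h₁N : ¬q₁ ∣ landau n) (h₂N : ¬q₂ ∣ landau n)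
    (hlt : P < q₁ * q₂) : P < q₁ + q₂ := by
  obtain ⟨K, hK⟩ := hPN
  have hK0 : K ≠ 0 := fun h => landau_ne_zero n (by rw [hK, h, mul_zero])
  have hell := ell_landau_le n
  have hrem := ell_add_prime_le hP hK0
  have hexch := lt_ell_add_of_lt_mul hK h₁ h₂ hne h₁N h₂N hlt
  rw [hK] at hell
  omega

theorem add_lt_add_of_mul_lt_mul {n P p q₁ q₂ : ℕ} (hP : P.Prime) (hPN : P ∣ landau n)
    (hp : p.Prime) (hpN : p ∣ landau n) (hpP : p ≠ P) (h₁ : q₁.Prime) (h₂ : q₂.Prime)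
    (hne : q₁ ≠ q₂) (h₁N : ¬q₁ ∣ landau n) (h₂N : ¬q₂ ∣ landau n) (hlt : p * P < q₁ * q₂) :
    p + P < q₁ + q₂ := by
  obtain ⟨K, hK⟩ :=
    Nat.Coprime.mul_dvd_of_dvd_of_dvd ((Nat.coprime_primes hp hP).2 hpP) hpN hPN
  have hK0 : K ≠ 0 := fun h => landau_ne_zero n (by rw [hK, h, mul_zero])
  have hell := ell_landau_le n
  have hremP := ell_add_prime_le hP hK0
  have hremp := ell_add_prime_le hp (mul_ne_zero hP.ne_zero hK0)
  have hexch := lt_ell_add_of_lt_mul hK h₁ h₂ hne h₁N h₂N hlt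
  rw [hK, mul_assoc] at hell
  omega

theorem sum_le_ell {N : ℕ} {S : Finset ℕ} (hN : N ≠ 0) (hS : ∀ p ∈ S, p.Prime ∧ p ∣ N) :
    ∑ p ∈ S, p ≤ ell N :=
  calc ∑ p ∈ S, p ≤ ∑ p ∈ S, p ^ N.factorization p := Finset.sum_le_sum fun p hp =>
        Nat.le_self_pow ((hS p hp).1.factorization_pos_of_dvd hN (hS p hp).2).ne' p
    _ ≤ ell N := Finset.sum_le_sum_of_subset fun p hp =>
        Nat.mem_primeFactors.2 ⟨(hS p hp).1, (hS p hp).2, hN⟩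

/-- The primes `p` with `√P < p ≤ t`. -/
def primesAboveSqrt (P t : ℕ) : Finset ℕ :=
  (Finset.range (t + 1)).filter fun p => p.Prime ∧ P < p ^ 2

theorem mem_primesAboveSqrt {P t p : ℕ} :
    p ∈ primesAboveSqrt P t ↔ p ≤ t ∧ p.Prime ∧ P < p ^ 2 := by
  simp [primesAboveSqrt]

/-- Condition under which a permutation of maximal order whose order is divisible by `P` lacks at
most one of the primes in `(√P, t]`: whenever `q₁ < q₂` are such primes with `P < q₁ + q₂`, the
pair `(q₁, q₂)` can be traded with profit for `P` and another prime `p`. -/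
def Exchangeable (P t : ℕ) : Prop :=
  ∀ q₁ q₂ : ℕ, q₁.Prime → q₂.Prime → q₁ < q₂ → P < q₁ ^ 2 → q₂ ≤ t → P < q₁ + q₂ →
    ∃ p, p.Prime ∧ P < p ^ 2 ∧ q₁ + q₂ ≤ p + P ∧ p * P < q₁ * q₂

theorem Exchangeable.exists_not_dvd_landau_lt {n P t q₁ q₂ : ℕ} (h : Exchangeable P t)
    (hP : P.Prime) (hPN : P ∣ landau n) (ht : t < P) (hlt : q₁ < q₂)
    (hq₁ : q₁ ∈ primesAboveSqrt P t) (hq₂ : q₂ ∈ primesAboveSqrt P t) (h₁N : ¬q₁ ∣ landau n)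
    (h₂N : ¬q₂ ∣ landau n) :
    ∃ p ∈ primesAboveSqrt P t, p < q₁ ∧ ¬p ∣ landau n := by
  obtain ⟨-, h₁, hPq₁⟩ := mem_primesAboveSqrt.1 hq₁
  obtain ⟨hq₂t, h₂, -⟩ := mem_primesAboveSqrt.1 hq₂
  have hsum : P < q₁ + q₂ := lt_add_of_lt_mul hP hPN h₁ h₂ hlt.ne h₁N h₂N (by nlinarith)
  obtain ⟨p, hp, hPp, hadd, hmul⟩ := h q₁ q₂ h₁ h₂ hlt hPq₁ hq₂t hsum
  have hpq : p < q₁ := by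
    by_contra hge
    have hbig : q₁ * q₂ ≤ p * P := Nat.mul_le_mul (not_lt.1 hge) (by omega)
    omega
  refine ⟨p, mem_primesAboveSqrt.2 ⟨by omega, hp, hPp⟩, hpq, fun hpN => ?_⟩
  have := add_lt_add_of_mul_lt_mul hP hPN hp hpN (by omega) h₁ h₂ hlt.ne h₁N h₂N hmul
  omega

theorem Exchangeable.card_not_dvd_landau_le_one {n P t : ℕ} (h : Exchangeable P t) (hP : P.Prime)
    (hPN : P ∣ landau n) (ht : t < P) :
    ((primesAboveSqrt P t).filter fun p => ¬p ∣ landau n).card ≤ 1 := by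
  set B := (primesAboveSqrt P t).filter fun p => ¬p ∣ landau n
  by_contra hc
  have hne : B.Nonempty := Finset.card_pos.1 (by omega)
  have hmin : B.min' hne ∈ B := B.min'_mem hne
  obtain ⟨q₂, hq₂, hq₂ne⟩ := Finset.exists_mem_ne (not_le.1 hc) (B.min' hne)
  have hlt : B.min' hne < q₂ := lt_of_le_of_ne (B.min'_le q₂ hq₂) hq₂ne.symm
  obtain ⟨h₁S, h₁N⟩ := Finset.mem_filter.1 hmin
  obtain ⟨h₂S, h₂N⟩ := Finset.mem_filter.1 hq₂
  obtain ⟨p, hpS, hpq, hpN⟩ := h.exists_not_dvd_landau_lt hP hPN ht hlt h₁S h₂S h₁N h₂N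
  exact absurd (B.min'_le p (Finset.mem_filter.2 ⟨hpS, hpN⟩)) (not_le.2 hpq)

theorem Exchangeable.sum_primesAboveSqrt_le {n P t : ℕ} (h : Exchangeable P t) (hP : P.Prime)
    (hPN : P ∣ landau n) (ht : t < P) : ∑ p ∈ primesAboveSqrt P t, p ≤ n := by
  have hmem := @mem_primesAboveSqrt P t
  have hcard := h.card_not_dvd_landau_le_one hP hPN ht
  set S := primesAboveSqrt P t
  have hmissing : ∑ p ∈ S.filter (fun p => ¬p ∣ landau n), p ≤ P := by
    obtain ⟨q, hq⟩ := Finset.card_le_one_iff_subset_singleton.1 hcard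
    rcases Finset.subset_singleton_iff.1 hq with hB | hB
    · simp [hB]
    · have hqS : q ∈ S := (Finset.mem_filter.1 (hB ▸ Finset.mem_singleton_self q)).1
      rw [hB, Finset.sum_singleton]
      exact (hmem.1 hqS).1.trans ht.le
  have hP_notMem : P ∉ S.filter fun p => p ∣ landau n := fun hPS =>
    absurd (hmem.1 (Finset.mem_filter.1 hPS).1).1 (not_le.2 ht)
  have hpresent : ∑ p ∈ insert P (S.filter fun p => p ∣ landau n), p ≤ ell (landau n) := by
    refine sum_le_ell (landau_ne_zero n) fun p hp => ?_
    rcases Finset.mem_insert.1 hp with rfl | hp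
    · exact ⟨hP, hPN⟩
    · obtain ⟨hpS, hpN⟩ := Finset.mem_filter.1 hp
      exact ⟨(hmem.1 hpS).2.1, hpN⟩
  rw [Finset.sum_insert hP_notMem] at hpresent
  have hsplit := Finset.sum_filter_add_sum_filter_not S (fun p => p ∣ landau n) fun p => p
  have hell := ell_landau_le n
  omega

/-! ### Trial division -/

/-- Primality test by trial division, to be evaluated by the kernel: `n` passes if it has no
divisor `d ≤ √n` in the list `ds`. -/
def trialDivision (ds : List ℕ) (n : ℕ) : Bool :=
  Nat.ble 2 n && ds.all fun d => Nat.blt n (d * d) || !(Nat.beq (n % d) 0)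

theorem trialDivision_eq_true {ds : List ℕ} {n : ℕ} :
    trialDivision ds n = true ↔ 2 ≤ n ∧ ∀ d ∈ ds, n < d * d ∨ ¬d ∣ n := by
  have hmod : ∀ d, (!Nat.beq (n % d) 0) = true ↔ ¬d ∣ n := fun d => by
    rw [Bool.not_eq_true', ← Bool.not_eq_true, Nat.beq_eq, Nat.dvd_iff_mod_eq_zero]
  simp only [trialDivision, Bool.and_eq_true, Nat.ble_eq, List.all_eq_true, Bool.or_eq_true,
    Nat.blt_eq, hmod]

theorem trialDivision_of_prime {ds : List ℕ} {n : ℕ} (hds : ∀ d ∈ ds, 2 ≤ d) (hn : n.Prime) :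
    trialDivision ds n = true := by
  refine trialDivision_eq_true.2 ⟨hn.two_le, fun d hd => or_iff_not_imp_right.2 fun hdvd => ?_⟩
  have htwo : 2 ≤ d := hds d hd
  have heq : d = n := ((Nat.dvd_prime hn).1 (not_not.1 hdvd)).resolve_left (by omega)
  nlinarith

theorem prime_of_trialDivision {ds : List ℕ} {b n : ℕ} (hds : ∀ p < b, p.Prime → p ∈ ds)
    (hn : n < b ^ 2) (h : trialDivision ds n = true) : n.Prime := by
  obtain ⟨htwo, hdvd⟩ := trialDivision_eq_true.1 h
  by_contra hnp
  have hsq : n.minFac ^ 2 ≤ n := Nat.minFac_sq_le_self (by omega) hnp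
  have hlt : n.minFac < b := lt_of_pow_lt_pow_left₀ 2 b.zero_le (hsq.trans_lt hn)
  rcases hdvd _ (hds _ hlt (Nat.minFac_prime (by omega))) with h | h
  · nlinarith
  · exact h (Nat.minFac_dvd n)

/-- The primes below `100`. -/
def primesBelow100 : List ℕ :=
  [2, 3, 5, 7, 11, 13, 17, 19, 23, 29, 31, 37, 41, 43, 47, 53, 59, 61, 67, 71, 73, 79, 83, 89, 97]

theorem mem_primesBelow100 {p : ℕ} (hp : p < 100) (hpp : p.Prime) : p ∈ primesBelow100 := by
  interval_cases p <;> first | (exfalso; revert hpp; norm_num; done) | simp [primesBelow100]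

/-- A primality test for numbers below `10000`. -/
def isPrime (n : ℕ) : Bool := trialDivision primesBelow100 n

theorem isPrime_iff {n : ℕ} (hn : n < 10000) : isPrime n = true ↔ n.Prime :=
  ⟨prime_of_trialDivision (fun _ => mem_primesBelow100) hn,
    trialDivision_of_prime (by simp [primesBelow100])⟩

/-! ### Landau's function for smooth numbers -/

/-- The variant of Landau's function in which only the orders with all prime factors below `b`
compete. -/
noncomputable def smoothLandau (b n : ℕ) : ℕ := sSup {M | M ∈ Nat.smoothNumbers b ∧ ell M ≤ n}

theorem bddAbove_smoothLandau (b n : ℕ) : BddAbove {M | M ∈ Nat.smoothNumbers b ∧ ell M ≤ n} :=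
  ⟨landau n, fun _ hM => le_landau (Nat.ne_zero_of_mem_smoothNumbers hM.1) hM.2⟩

theorem le_smoothLandau {b n M : ℕ} (hM : M ∈ Nat.smoothNumbers b) (h : ell M ≤ n) :
    M ≤ smoothLandau b n :=
  le_csSup (bddAbove_smoothLandau b n) ⟨hM, h⟩

theorem one_mem_smoothNumbers (b : ℕ) : 1 ∈ Nat.smoothNumbers b :=
  Nat.smoothNumbers_mono b.zero_le (by simp)

theorem smoothLandau_spec (b n : ℕ) :
    smoothLandau b n ∈ Nat.smoothNumbers b ∧ ell (smoothLandau b n) ≤ n :=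
  Nat.sSup_mem (s := {M | M ∈ Nat.smoothNumbers b ∧ ell M ≤ n})
    ⟨1, one_mem_smoothNumbers b, by simp [ell_one]⟩ (bddAbove_smoothLandau b n)

theorem smoothLandau_le_landau (b n : ℕ) : smoothLandau b n ≤ landau n :=
  le_landau (Nat.ne_zero_of_mem_smoothNumbers (smoothLandau_spec b n).1) (smoothLandau_spec b n).2

theorem smoothLandau_mono {b m n : ℕ} (h : m ≤ n) : smoothLandau b m ≤ smoothLandau b n :=
  le_smoothLandau (smoothLandau_spec b m).1 ((smoothLandau_spec b m).2.trans h)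

theorem smoothLandau_zero (n : ℕ) : smoothLandau 0 n = 1 := by
  simpa using (smoothLandau_spec 0 n).1

theorem smoothLandau_succ_of_not_prime {b : ℕ} (hb : ¬b.Prime) :
    smoothLandau (b + 1) = smoothLandau b := by
  funext n
  rw [smoothLandau, Nat.smoothNumbers_succ hb, smoothLandau]

/-- `raise q f n = q * f (n - q)`, read as `0` for `n < q`: the value at `n` after the prime power
`q` has been adjoined to all the orders counted by `f`. -/
def raise (q : ℕ) (f : ℕ → ℕ) (n : ℕ) : ℕ := if q ≤ n then q * f (n - q) else 0

/-- The pointwise maximum of `g` and of `raise q f` for `q` in the list `qs`. -/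
def maxRaise (f : ℕ → ℕ) (qs : List ℕ) (g : ℕ → ℕ) : ℕ → ℕ :=
  qs.foldl (fun h q n => max (raise q f n) (h n)) g

theorem maxRaise_le_iff {f : ℕ → ℕ} {qs : List ℕ} {g : ℕ → ℕ} {n c : ℕ} :
    maxRaise f qs g n ≤ c ↔ g n ≤ c ∧ ∀ q ∈ qs, raise q f n ≤ c := by
  induction qs generalizing g with
  | nil => simp [maxRaise]
  | cons q qs ih =>
    rw [maxRaise, List.foldl_cons, ← maxRaise, ih, max_le_iff, List.forall_mem_cons]
    tauto

/-- The powers `p, p ^ 2, …` below `L ≤ 2 ^ 16` of a number `p ≥ 2`. -/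
def powersBelow (p L : ℕ) : List ℕ :=
  ((List.range 16).map fun k => p ^ (k + 1)).filter fun q => Nat.blt q L

theorem mem_powersBelow {p L q : ℕ} (hp : 2 ≤ p) (hL : L ≤ 2 ^ 16) :
    q ∈ powersBelow p L ↔ q < L ∧ ∃ k ≠ 0, q = p ^ k := by
  simp only [powersBelow, List.mem_filter, List.mem_map, List.mem_range, Nat.blt_eq]
  constructor
  · rintro ⟨⟨k, -, rfl⟩, hq⟩
    exact ⟨hq, k + 1, k.succ_ne_zero, rfl⟩
  · rintro ⟨hq, k, hk, rfl⟩
    have hk16 : k < 16 := (Nat.pow_lt_pow_iff_right one_lt_two).1 <|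
      (Nat.pow_le_pow_left hp k).trans_lt (hq.trans_le hL)
    exact ⟨⟨k - 1, by omega, by rw [Nat.sub_add_cancel (by omega)]⟩, hq⟩

/-- For `n < L`, the largest order `p ^ k * M` with `k ≥ 1`, all prime factors of `M` below `p` and
`ℓ(p ^ k * M) ≤ n` (and `0` if there is none). -/
noncomputable def landauWithPrime (p L : ℕ) : ℕ → ℕ :=
  maxRaise (smoothLandau p) (powersBelow p L) fun _ => 0

theorem not_dvd_of_mem_smoothNumbers {p M : ℕ} (hp : p.Prime) (hM : M ∈ Nat.smoothNumbers p) :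
    ¬p ∣ M :=
  fun h => lt_irrefl p (Nat.mem_smoothNumbers'.1 hM p hp h)

theorem le_landauWithPrime {p L n k M : ℕ} (hp : p.Prime) (hL : L ≤ 2 ^ 16) (hn : n < L)
    (hk : k ≠ 0) (hM : M ∈ Nat.smoothNumbers p) (h : ell (p ^ k * M) ≤ n) :
    p ^ k * M ≤ landauWithPrime p L n := by
  rw [ell_prime_pow_mul hp hk (not_dvd_of_mem_smoothNumbers hp hM)] at h
  have hq : p ^ k ∈ powersBelow p L := (mem_powersBelow hp.two_le hL).2 ⟨by omega, k, hk, rfl⟩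
  calc p ^ k * M ≤ p ^ k * smoothLandau p (n - p ^ k) :=
        Nat.mul_le_mul_left _ (le_smoothLandau hM (by omega))
    _ = raise (p ^ k) (smoothLandau p) n := by rw [raise, if_pos (by omega)]
    _ ≤ landauWithPrime p L n := (maxRaise_le_iff.1 le_rfl).2 _ hq

theorem landauWithPrime_le {p L : ℕ} (hp : p.Prime) (hL : L ≤ 2 ^ 16) (n : ℕ) :
    landauWithPrime p L n ≤ smoothLandau (p + 1) n := by
  refine maxRaise_le_iff.2 ⟨Nat.zero_le _, fun q hq => ?_⟩
  obtain ⟨-, k, hk, rfl⟩ := (mem_powersBelow hp.two_le hL).1 hq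
  rw [raise]
  split_ifs with hn
  · obtain ⟨hM, hell⟩ := smoothLandau_spec p (n - p ^ k)
    refine le_smoothLandau (Nat.pow_mul_mem_smoothNumbers hp.ne_zero k hM) ?_
    rw [ell_prime_pow_mul hp hk (not_dvd_of_mem_smoothNumbers hp hM)]
    omega
  · exact Nat.zero_le _

theorem exists_eq_pow_mul_of_mem_smoothNumbers {p N : ℕ} (hp : p.Prime)
    (hN : N ∈ Nat.smoothNumbers (p + 1)) : ∃ k, ∃ M ∈ Nat.smoothNumbers p, N = p ^ k * M := by
  obtain ⟨k, M, hpM, rfl⟩ :=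
    Nat.exists_eq_pow_mul_and_not_dvd (Nat.ne_zero_of_mem_smoothNumbers hN) p hp.ne_one
  refine ⟨k, M, Nat.mem_smoothNumbers'.2 fun q hq hqM => ?_, rfl⟩
  have hle : q < p + 1 := Nat.mem_smoothNumbers'.1 hN q hq (hqM.mul_left _)
  have hne : q ≠ p := fun h => hpM (h ▸ hqM)
  omega

theorem smoothLandau_succ {p L n : ℕ} (hp : p.Prime) (hL : L ≤ 2 ^ 16) (hn : n < L) :
    smoothLandau (p + 1) n = max (landauWithPrime p L n) (smoothLandau p n) := by
  refine le_antisymm ?_ (max_le (landauWithPrime_le hp hL n) ?_)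
  · obtain ⟨hsmooth, hell⟩ := smoothLandau_spec (p + 1) n
    obtain ⟨k, M, hM, hN⟩ := exists_eq_pow_mul_of_mem_smoothNumbers hp hsmooth
    rw [hN] at hell ⊢
    rcases eq_or_ne k 0 with rfl | hk
    · rw [pow_zero, one_mul] at hell ⊢
      exact le_max_of_le_right (le_smoothLandau hM hell)
    · exact le_max_of_le_left (le_landauWithPrime hp hL hn hk hM hell)
  · obtain ⟨hM, hell⟩ := smoothLandau_spec p n
    exact le_smoothLandau (Nat.smoothNumbers_mono p.le_succ hM) hell

theorem mem_smoothNumbers_of_maxPrimeFac_lt {N b : ℕ} (hN : N ≠ 0) (h : maxPrimeFac N < b) :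
    N ∈ Nat.smoothNumbers b :=
  Nat.mem_smoothNumbers'.2 fun _ hp hpN => (le_maxPrimeFac hN hp hpN).trans_lt h

theorem dvd_of_maxPrimeFac_eq {N p : ℕ} (hN : N ≠ 0) (hp : p.Prime) (h : maxPrimeFac N = p) :
    p ∣ N := by
  have hone : N ≠ 1 := by
    rintro rfl
    exact hp.ne_zero (h.symm.trans (by simp [maxPrimeFac]))
  exact h ▸ maxPrimeFac_dvd (by omega)

theorem maxPrimeFac_landau_ne {p L n : ℕ} (hp : p.Prime) (hL : L ≤ 2 ^ 16) (hn : n < L)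
    (hlt : landauWithPrime p L n < smoothLandau p n) : maxPrimeFac (landau n) ≠ p := by
  intro heq
  have hsmooth : landau n ∈ Nat.smoothNumbers (p + 1) :=
    mem_smoothNumbers_of_maxPrimeFac_lt (landau_ne_zero n) (heq ▸ Nat.lt_succ_self p)
  have hdvd : p ∣ landau n := dvd_of_maxPrimeFac_eq (landau_ne_zero n) hp heq
  obtain ⟨k, M, hM, hN⟩ := exists_eq_pow_mul_of_mem_smoothNumbers hp hsmooth
  have hk : k ≠ 0 := by
    rintro rfl
    rw [hN, pow_zero, one_mul] at hdvd
    exact not_dvd_of_mem_smoothNumbers hp hM hdvd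
  have hle : landau n ≤ landauWithPrime p L n :=
    hN ▸ le_landauWithPrime hp hL hn hk hM (hN ▸ ell_landau_le n)
  exact (hle.trans_lt hlt).not_ge (smoothLandau_le_landau p n)

/-! ### Dynamic programming for primes below `468` -/

/-- `raise q f`, computed on packed vectors. -/
def shiftMul (w n q X : ℕ) : ℕ := ((X &&& (2 ^ (w * (n - q)) - 1)) * q) <<< (w * q)

theorem shiftMul_pack {w n q : ℕ} {f : ℕ → ℕ} (hf : ∀ i < n, f i < 2 ^ w) (hq : q ≤ n) :
    shiftMul w n q (pack w f n) = pack w (raise q f) n := by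
  obtain ⟨m, rfl⟩ := Nat.exists_eq_add_of_le hq
  have hlow : pack w (raise q f) q = 0 := by
    rw [← pack_zero w q]
    exact pack_congr fun i hi => if_neg (not_le.2 hi)
  have hhigh : pack w (fun i => raise q f (q + i)) m = q * pack w f m := by
    rw [← pack_mul]
    exact pack_congr fun i _ => by
      rw [raise, if_pos (Nat.le_add_right q i), Nat.add_sub_cancel_left]
  rw [shiftMul, Nat.shiftLeft_eq, Nat.and_two_pow_sub_one_eq_mod, Nat.add_sub_cancel_left,
    pack_mod hf (Nat.le_add_left m q), pack_append, hlow, hhigh, zero_add]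
  ring

/-- `maxRaise f qs`, computed on packed vectors. -/
def packMaxRaise (w n X : ℕ) : List ℕ → ℕ → ℕ
  | [], Y => Y
  | q :: qs, Y => force (packMax w n (shiftMul (w + 1) n q X) Y) fun Z => packMaxRaise w n X qs Z

theorem packMaxRaise_pack {w n : ℕ} {f g : ℕ → ℕ} {qs : List ℕ} (hf : ∀ i < n, f i < 2 ^ w)
    (hg : ∀ i < n, g i < 2 ^ w) (hqs : ∀ q ∈ qs, q ≤ n ∧ ∀ i < n, raise q f i < 2 ^ w) :
    packMaxRaise w n (pack (w + 1) f n) qs (pack (w + 1) g n)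
      = pack (w + 1) (maxRaise f qs g) n := by
  induction qs generalizing g with
  | nil => rfl
  | cons q qs ih =>
    obtain ⟨⟨hq, hraise⟩, hqs⟩ := List.forall_mem_cons.1 hqs
    have hf' : ∀ i < n, f i < 2 ^ (w + 1) := fun i hi =>
      (hf i hi).trans (Nat.pow_lt_pow_right one_lt_two w.lt_succ_self)
    rw [packMaxRaise, force_eq, shiftMul_pack hf' hq, packMax_eq hraise hg,
      ih (fun i hi => max_lt (hraise i hi) (hg i hi)) hqs, maxRaise, maxRaise, List.foldl_cons]

/-- Whether the first of two packed vectors is smaller in all coordinates. -/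
def packLt (w n X Y : ℕ) : Bool := Nat.beq (packMax w n (X + packOnes (w + 1) n) Y) Y

theorem lt_of_packLt {w n : ℕ} {f g : ℕ → ℕ} (hf : ∀ i < n, f i + 1 < 2 ^ w)
    (hg : ∀ i < n, g i < 2 ^ w) (h : packLt w n (pack (w + 1) f n) (pack (w + 1) g n) = true)
    {i : ℕ} (hi : i < n) : f i < g i := by
  have hpow : 2 ^ w < 2 ^ (w + 1) := Nat.pow_lt_pow_right one_lt_two w.lt_succ_self
  rw [packLt, Nat.beq_eq, ← pack_one w.succ_pos, ← pack_add, packMax_eq hf hg] at h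
  have hmax : max (f i + 1) (g i) = g i :=
    pack_inj (fun i hi => (max_lt (hf i hi) (hg i hi)).trans hpow)
      (fun i hi => (hg i hi).trans hpow) h hi
  exact max_eq_right_iff.1 hmax

/-- The coordinates `m, …, m + n - 1` of a packed vector. -/
def packSlice (w m n X : ℕ) : ℕ := (X >>> (w * m)) &&& (2 ^ (w * n) - 1)

theorem packSlice_pack {w m n l : ℕ} {f : ℕ → ℕ} (hf : ∀ i < l, f i < 2 ^ w) (h : m + n ≤ l) :
    packSlice w m n (pack w f l) = pack w (fun i => f (m + i)) n := by
  rw [packSlice, Nat.shiftRight_eq_div_pow, Nat.and_two_pow_sub_one_eq_mod, pack_div hf (by omega),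
    pack_mod (fun i hi => hf _ (by omega)) (by omega)]

/-- From the packed table `X` of `smoothLandau p` on `n < L`, compute that of `smoothLandau (p + 1)`
for a prime `p`. Fails if some entry does not leave room for a further factor `< 2 ^ 16`, or if
`maxPrimeFac (landau n) = p` is not excluded for all `4 ≤ n < m`. -/
def smoothStep (w L m p X : ℕ) : Option ℕ :=
  force (packMaxRaise w L X (powersBelow p L) 0) fun Y =>
    force (packMax w L Y X) fun Z =>
      bif Nat.blt (Z >>> ((w + 1) * (L - 1))) (2 ^ (w - 16)) && Nat.ble m L &&
        packLt w (m - 4) (packSlice (w + 1) 4 (m - 4) Y) (packSlice (w + 1) 4 (m - 4) X)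
      then some Z else none

theorem packMaxRaise_smoothLandau {w L p : ℕ} (hw : 16 ≤ w) (hL : L ≤ 2 ^ 16) (hp : 2 ≤ p)
    (hX : ∀ i < L, smoothLandau p i < 2 ^ (w - 16)) :
    packMaxRaise w L (pack (w + 1) (smoothLandau p) L) (powersBelow p L) 0
      = pack (w + 1) (landauWithPrime p L) L ∧ ∀ i < L, landauWithPrime p L i < 2 ^ w := by
  have hraise : ∀ q ∈ powersBelow p L, q ≤ L ∧ ∀ i < L, raise q (smoothLandau p) i < 2 ^ w := by
    intro q hq
    have hqL : q < L := ((mem_powersBelow hp hL).1 hq).1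
    refine ⟨hqL.le, fun i hi => ?_⟩
    rw [raise]
    split_ifs
    · calc q * smoothLandau p (i - q) < 2 ^ 16 * 2 ^ (w - 16) :=
            Nat.mul_lt_mul'' (hqL.trans_le hL) (hX _ (by omega))
        _ = 2 ^ w := by rw [← pow_add, Nat.add_sub_cancel' hw]
    · positivity
  have hXw : ∀ i < L, smoothLandau p i < 2 ^ w := fun i hi =>
    (hX i hi).trans_le (Nat.pow_le_pow_right two_pos (Nat.sub_le w 16))
  refine ⟨?_, fun i hi => ?_⟩
  · rw [← pack_zero (w + 1) L, packMaxRaise_pack hXw (fun _ _ => by positivity) hraise,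
      landauWithPrime]
  · refine Nat.lt_of_le_pred (by positivity) (maxRaise_le_iff.2 ⟨Nat.zero_le _, fun q hq => ?_⟩)
    exact Nat.le_pred_of_lt ((hraise q hq).2 i hi)

theorem smoothStep_spec {w L m p Z : ℕ} (hw : 17 ≤ w) (hL : L ≤ 2 ^ 16) (hL0 : 0 < L)
    (hp : p.Prime) (hX : ∀ i < L, smoothLandau p i < 2 ^ (w - 16))
    (h : smoothStep w L m p (pack (w + 1) (smoothLandau p) L) = some Z) :
    Z = pack (w + 1) (smoothLandau (p + 1)) L ∧
      (∀ i < L, smoothLandau (p + 1) i < 2 ^ (w - 16)) ∧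
      ∀ n, 4 ≤ n → n < m → maxPrimeFac (landau n) ≠ p := by
  have hpow : 2 ^ (w - 16) < 2 ^ w := Nat.pow_lt_pow_right one_lt_two (by omega)
  have hpow' : 2 ^ w < 2 ^ (w + 1) := Nat.pow_lt_pow_right one_lt_two w.lt_succ_self
  obtain ⟨hY, hYw⟩ := packMaxRaise_smoothLandau (by omega) hL hp.two_le hX
  have hXw : ∀ i < L, smoothLandau p i < 2 ^ w := fun i hi => (hX i hi).trans hpow
  have hmax : pack (w + 1) (fun i => max (landauWithPrime p L i) (smoothLandau p i)) L
      = pack (w + 1) (smoothLandau (p + 1)) L :=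
    pack_congr fun i hi => (smoothLandau_succ hp hL hi).symm
  have hZw : ∀ i < L, smoothLandau (p + 1) i < 2 ^ w := fun i hi => by
    rw [smoothLandau_succ hp hL hi]
    exact max_lt (hYw i hi) (hXw i hi)
  rw [smoothStep, force_eq, force_eq, hY, packMax_eq hYw hXw, hmax, cond_eq_ite,
    Option.ite_none_right_eq_some, Bool.and_eq_true, Bool.and_eq_true, Nat.blt_eq, Nat.ble_eq,
    Nat.shiftRight_eq_div_pow, pack_div (fun i hi => (hZw i hi).trans hpow') (Nat.sub_le L 1)] at h
  obtain ⟨⟨⟨htop, hm⟩, hlt⟩, heq⟩ := h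
  have hZ : ∀ i < L, smoothLandau (p + 1) i < 2 ^ (w - 16) := fun i hi => by
    refine (smoothLandau_mono (Nat.le_pred_of_lt hi)).trans_lt ?_
    rw [Nat.sub_sub_self hL0] at htop
    simpa [pack] using htop
  refine ⟨(Option.some.inj heq).symm, hZ, fun n hn hnm => ?_⟩
  rw [packSlice_pack (fun i hi => (hYw i hi).trans hpow') (by omega),
    packSlice_pack (fun i hi => (hXw i hi).trans hpow') (by omega)] at hlt
  have hYX : landauWithPrime p L (4 + (n - 4)) < smoothLandau p (4 + (n - 4)) := by
    refine lt_of_packLt (fun i hi => ?_) (fun i hi => hXw _ (by omega)) hlt (by omega)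
    have := (landauWithPrime_le hp hL (4 + i)).trans_lt (hZ (4 + i) (by omega))
    omega
  rw [Nat.add_sub_cancel' hn] at hYX
  exact maxPrimeFac_landau_ne hp hL (hnm.trans_le hm) hYX

/-- From the packed table `X` of `smoothLandau b` on `n < L`, compute that of
`smoothLandau (b + k)`, excluding on the way each prime `p` as the largest prime factor of
`landau n` for `4 ≤ n < windowEnd p`. -/
def smoothTable (windowEnd : ℕ → ℕ) (w L : ℕ) : ℕ → ℕ → ℕ → Option ℕ
  | 0, _, X => some X
  | k + 1, b, X =>
    bif isPrime b then
      (smoothStep w L (windowEnd b) b X).bind fun Z => smoothTable windowEnd w L k (b + 1) Z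
    else smoothTable windowEnd w L k (b + 1) X

theorem smoothTable_spec {windowEnd : ℕ → ℕ} {w L k b Z : ℕ} (hw : 17 ≤ w) (hL : L ≤ 2 ^ 16)
    (hL0 : 0 < L) (hk : b + k ≤ 10000) (hX : ∀ i < L, smoothLandau b i < 2 ^ (w - 16))
    (h : smoothTable windowEnd w L k b (pack (w + 1) (smoothLandau b) L) = some Z) :
    Z = pack (w + 1) (smoothLandau (b + k)) L ∧
      (∀ i < L, smoothLandau (b + k) i < 2 ^ (w - 16)) ∧
      ∀ p, p.Prime → b ≤ p → p < b + k → ∀ n, 4 ≤ n → n < windowEnd p →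
        maxPrimeFac (landau n) ≠ p := by
  induction k generalizing b with
  | zero =>
    obtain rfl : _ = Z := Option.some.inj h
    exact ⟨rfl, hX, fun p _ hbp hpb => absurd hpb (not_lt.2 hbp)⟩
  | succ k ih =>
    rw [smoothTable, cond_eq_ite] at h
    simp only [isPrime_iff (show b < 10000 by omega)] at h
    rw [← Nat.add_assoc, Nat.add_right_comm]
    split_ifs at h with hb
    · obtain ⟨Y, hY, h⟩ := Option.bind_eq_some_iff.1 h
      obtain ⟨rfl, hXb, hexcl⟩ := smoothStep_spec hw hL hL0 hb hX hY
      obtain ⟨hZ, hbound, hall⟩ := ih (by omega) hXb h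
      refine ⟨hZ, hbound, fun p hp hbp hpb n hn hnp => ?_⟩
      rcases hbp.eq_or_lt with rfl | hlt
      · exact hexcl n hn hnp
      · exact hall p hp hlt hpb n hn hnp
    · rw [← smoothLandau_succ_of_not_prime hb] at h hX
      obtain ⟨hZ, hbound, hall⟩ := ih (by omega) hX h
      refine ⟨hZ, hbound, fun p hp hbp hpb => hall p hp ?_ hpb⟩
      exact hbp.lt_of_ne fun heq => hb (heq ▸ hp)

theorem pack_smoothLandau_zero (w L : ℕ) :
    pack (w + 1) (smoothLandau 0) L = packOnes (w + 1) L := by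
  rw [funext smoothLandau_zero, pack_one w.succ_pos]

theorem smoothTable_zero_spec {windowEnd : ℕ → ℕ} {w L k Z : ℕ} (hw : 17 ≤ w) (hL : L ≤ 2 ^ 16)
    (hL0 : 0 < L) (hk : k ≤ 10000)
    (h : smoothTable windowEnd w L k 0 (packOnes (w + 1) L) = some Z) :
    Z = pack (w + 1) (smoothLandau k) L ∧ (∀ i < L, smoothLandau k i < 2 ^ (w - 16)) ∧
      ∀ p, p.Prime → p < k → ∀ n, 4 ≤ n → n < windowEnd p → maxPrimeFac (landau n) ≠ p := by
  rw [← pack_smoothLandau_zero] at h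
  have hX : ∀ i < L, smoothLandau 0 i < 2 ^ (w - 16) := fun i _ => by
    rw [smoothLandau_zero]
    exact Nat.one_lt_two_pow (by omega)
  obtain ⟨hZ, hbound, hall⟩ := smoothTable_spec hw hL hL0 (by omega) hX h
  rw [zero_add] at hZ hbound hall
  exact ⟨hZ, hbound, fun p hp => hall p hp p.zero_le⟩

/-- The strict inequality `P / √(n log n) < 43 / √(215 log 215)`, in squared form. -/
def Good (P n : ℕ) : Prop :=
  (P : ℝ) ^ 2 * (215 * Real.log 215) < 43 ^ 2 * (n * Real.log n)

theorem Good.mono {P Q m n : ℕ} (h : Good Q m) (hPQ : P ≤ Q) (hmn : m ≤ n) : Good P n := by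
  have hm : m ≠ 0 := by
    rintro rfl
    have : 0 ≤ (Q : ℝ) ^ 2 * (215 * Real.log 215) := by positivity
    simp only [Good, CharP.cast_eq_zero, zero_mul, mul_zero] at h
    exact h.not_ge this
  have hm' : (1 : ℝ) ≤ m := by exact_mod_cast Nat.one_le_iff_ne_zero.2 hm
  have : 0 ≤ Real.log m := Real.log_nonneg hm'
  calc (P : ℝ) ^ 2 * (215 * Real.log 215) ≤ (Q : ℝ) ^ 2 * (215 * Real.log 215) := by gcongr
    _ < 43 ^ 2 * (m * Real.log m) := h
    _ ≤ 43 ^ 2 * (n * Real.log n) := by gcongr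

/-- A sufficient numerical test for `Good P m`, based on `log 215 < 7.749 log 2` and on
`⌊64 log₂ m⌋`. -/
def isGood (P m : ℕ) : Bool :=
  Nat.blt (P * P * (215 * 7749 * 64)) (43 * 43 * 1000 * m * Nat.log2 (m ^ 64))

theorem log_215_lt : Real.log 215 < 7749 / 1000 * Real.log 2 := by
  have hpow : (215 : ℕ) ^ 1000 < 2 ^ 7749 := by decide +kernel
  have hlog : Real.log (215 ^ 1000) < Real.log (2 ^ 7749) :=
    Real.log_lt_log (by positivity) (by exact_mod_cast hpow)
  rw [Real.log_pow, Real.log_pow] at hlog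
  push_cast at hlog
  linarith

theorem log2_pow_mul_log_two_le {m : ℕ} (hm : m ≠ 0) (k : ℕ) :
    (Nat.log2 (m ^ k) : ℝ) * Real.log 2 ≤ k * Real.log m := by
  have hpow : 2 ^ Nat.log2 (m ^ k) ≤ m ^ k := Nat.log2_self_le (by positivity)
  rw [← Real.log_pow, ← Real.log_pow]
  exact Real.log_le_log (by positivity) (by exact_mod_cast hpow)

theorem good_of_isGood {P m : ℕ} (h : isGood P m = true) : Good P m := by
  rw [isGood, Nat.blt_eq] at h
  have hm : m ≠ 0 := by
    rintro rfl
    simp at h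
  have hcast : (P : ℝ) * P * (215 * 7749 * 64)
      < 43 * 43 * 1000 * m * (Nat.log2 (m ^ 64) : ℕ) := by exact_mod_cast h
  have htwo : 0 < Real.log 2 := Real.log_pos one_lt_two
  have hlog := log2_pow_mul_log_two_le hm 64
  push_cast at hlog
  rw [Good]
  have h215 : (P : ℝ) ^ 2 * Real.log 215 ≤ P ^ 2 * (7749 / 1000 * Real.log 2) :=
    mul_le_mul_of_nonneg_left log_215_lt.le (by positivity)
  have hmlog := mul_le_mul_of_nonneg_left hlog (Nat.cast_nonneg (α := ℝ) m)
  have hscaled := mul_lt_mul_of_pos_right hcast htwo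
  nlinarith

/-- A bound such that `Good p n` for all `n ≥ windowEnd p` (`n ≠ 215` if `p = 43`): an approximate
solution of `m log m = p² / 43² * 215 log 215`, obtained by fixed point iteration. -/
def windowEnd (p : ℕ) : ℕ :=
  bif Nat.beq p 43 then 215 else
    (fun m => max 4 (p * p * (215 * 7749 * 64) / (43 * 43 * 1000 * Nat.log2 (m ^ 64)) + 1))^[6]
      (p * p)

theorem isGood_windowEnd : ((List.range 468).all fun p =>
    !isPrime p || Nat.beq p 43 || isGood p (windowEnd p)) = true := by
  decide +kernel

theorem smoothTable_isSome :
    (smoothTable windowEnd 575 14243 468 0 (packOnes 576 14243)).isSome := by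
  decide +kernel

theorem good_or_eq_of_lt_468 {P n : ℕ} (hP : P.Prime) (hPlt : P < 468) (hn : 4 ≤ n)
    (h : maxPrimeFac (landau n) = P) : Good P n ∨ P = 43 ∧ n = 215 := by
  obtain ⟨Z, hZ⟩ := Option.isSome_iff_exists.1 smoothTable_isSome
  obtain ⟨-, -, hexcl⟩ := smoothTable_zero_spec (by norm_num) (by norm_num) (by norm_num)
    (by norm_num) hZ
  have hwin : windowEnd P ≤ n := not_lt.1 fun hlt => hexcl P hP hPlt n hn hlt h
  have hgood := List.all_eq_true.1 isGood_windowEnd P (List.mem_range.2 hPlt)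
  rw [Bool.or_eq_true, Bool.or_eq_true, Bool.not_eq_true', ← Bool.not_eq_true,
    isPrime_iff (by omega), Nat.beq_eq, or_iff_right (not_not.2 hP)] at hgood
  rcases hgood with rfl | hgood
  · rcases (show 215 ≤ n from hwin).eq_or_lt with rfl | hlt
    · exact Or.inr ⟨rfl, rfl⟩
    · exact Or.inl ((good_of_isGood (m := 216) (by decide +kernel)).mono le_rfl hlt)
  · exact Or.inl ((good_of_isGood hgood).mono le_rfl hwin)

theorem le_landau_215 : 103489212907080 ≤ landau 215 := by
  refine le_landau (by norm_num) ?_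
  have hfactor : 103489212907080
      = 2 ^ 3 * (3 ^ 2 * (5 ^ 1 * (7 ^ 1 * (11 ^ 1 * (13 ^ 1 * (17 ^ 1 * (19 ^ 1 * (23 ^ 1 *
        (29 ^ 1 * (31 ^ 1 * 43 ^ 1)))))))))) := by norm_num
  rw [hfactor]
  iterate 11 rw [ell_prime_pow_mul (by norm_num) (by norm_num) (by norm_num)]
  rw [ell_prime_pow (by norm_num) (by norm_num)]
  norm_num

theorem smoothTable_215 : ((smoothTable (fun _ => 4) 127 216 42 0 (packOnes 128 216)).any fun Z =>
    Nat.blt (packSlice 128 215 1 Z) 103489212907080) = true := by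
  decide +kernel

theorem smoothLandau_215_lt : smoothLandau 42 215 < 103489212907080 := by
  obtain ⟨Z, hZ, hlt⟩ := (Option.any_eq_true _ _).1 smoothTable_215
  obtain ⟨hpack, hbound, -⟩ := smoothTable_zero_spec (by norm_num) (by norm_num) (by norm_num)
    (by norm_num) hZ
  have hbound' : ∀ i < 216, smoothLandau 42 i < 2 ^ 128 := fun i hi =>
    (hbound i hi).trans (Nat.pow_lt_pow_right one_lt_two (by norm_num))
  have htop := packSlice_pack hbound' (show 215 + 1 ≤ 216 by norm_num)
  rw [hpack, htop, Nat.blt_eq] at hlt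
  simpa [pack] using hlt

theorem le_maxPrimeFac_landau_215 : 43 ≤ maxPrimeFac (landau 215) := by
  have hle := le_landau_215
  have hprime := maxPrimeFac_prime (show 2 ≤ landau 215 by omega)
  by_contra! hlt
  have hne : maxPrimeFac (landau 215) ≠ 42 := fun h => absurd (h ▸ hprime) (by norm_num)
  have hsmooth := mem_smoothNumbers_of_maxPrimeFac_lt (landau_ne_zero 215)
    (show maxPrimeFac (landau 215) < 42 by omega)
  exact (hle.trans (le_smoothLandau hsmooth (ell_landau_le 215))).not_gt smoothLandau_215_lt

/-! ### Exchange tests -/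

/-- Applies `k` to the list `l`, which the kernel is made to evaluate completely first. -/
def forceList {α : Type*} : List ℕ → (List ℕ → α) → α
  | [], k => k []
  | a :: l, k => force a fun a => forceList l fun l => k (a :: l)

theorem forceList_eq {α : Type*} (l : List ℕ) (k : List ℕ → α) : forceList l k = k l := by
  induction l generalizing k with
  | nil => rfl
  | cons a l ih => rw [forceList, force_eq, ih]

/-- Checks for all consecutive entries `a < p` of an increasing list, up to `2 * T - A - 1`, that
`p * A < q₁ * q₂` whenever `q₁, q₂ ≤ T` and `q₁ + q₂ > A + a`; the smallest possible product is
`T * (A + a + 1 - T)`. The gaps `(a, p)` accepted by `exempt` and the `p` with `p² ≤ Q` are left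
out. -/
def gapTest (A Q T : ℕ) (exempt : ℕ → ℕ → Bool) : ℕ → List ℕ → Bool
  | a, [] => Nat.ble (2 * T) (A + a + 1)
  | a, p :: l => Nat.ble (2 * T) (A + a + 1) ||
      bif Nat.ble (p * p) Q then gapTest A Q T exempt a l else
        (Nat.blt (p * A + T * T) (T * (A + a + 1)) || exempt a p) && gapTest A Q T exempt p l

/-- Checks that `p * P < q₁ * q₂` for all distinct `q₁` and `q₂` in `l` with `q₁ + q₂ > P + a`. -/
def pairTest (P : ℕ) (l : List ℕ) (a p : ℕ) : Bool := l.all fun q₂ =>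
  Nat.blt (p * P + q₂ * q₂) (q₂ * (P + a + 1)) ||
    l.all fun q₁ => Nat.beq q₁ q₂ || Nat.ble (q₁ + q₂) (P + a) || Nat.blt (p * P) (q₁ * q₂)

theorem gapTest_spec {A Q T : ℕ} {exempt : ℕ → ℕ → Bool} {l : List ℕ} {a x : ℕ}
    (h : gapTest A Q T exempt a l = true) (hax : a < x) (hxT : A + x < 2 * T) :
    ∃ p ∈ l, Q < p ^ 2 ∧ x ≤ p ∧
      (p * A + T * T < T * (A + x) ∨ ∃ b < x, exempt b p = true) := by
  induction l generalizing a with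
  | nil =>
    rw [gapTest, Nat.ble_eq] at h
    omega
  | cons p l ih =>
    rw [gapTest, Bool.or_eq_true, Nat.ble_eq, or_iff_right (by omega)] at h
    rcases hpQ : Nat.ble (p * p) Q with _ | _ <;> rw [hpQ] at h
    · rw [cond_false, Bool.and_eq_true, Bool.or_eq_true, Nat.blt_eq] at h
      rw [← Bool.not_eq_true, Nat.ble_eq, not_le, ← sq] at hpQ
      rcases le_or_gt x p with hxp | hpx
      · refine ⟨p, List.mem_cons_self, hpQ, hxp, h.1.imp (fun hlt => ?_) fun hex => ⟨a, hax, hex⟩⟩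
        exact hlt.trans_le (Nat.mul_le_mul_left _ (by omega))
      · obtain ⟨r, hr, hspec⟩ := ih h.2 hpx
        exact ⟨r, List.mem_cons_of_mem _ hr, hspec⟩
    · obtain ⟨r, hr, hspec⟩ := ih h hax
      exact ⟨r, List.mem_cons_of_mem _ hr, hspec⟩

theorem mul_add_le_mul_add_sq {q₁ q₂ T : ℕ} (h₁ : q₁ ≤ T) (h₂ : q₂ ≤ T) :
    T * (q₁ + q₂) ≤ q₁ * q₂ + T * T := by
  obtain ⟨d, rfl⟩ := Nat.exists_eq_add_of_le h₁
  nlinarith [Nat.mul_le_mul_left d h₂]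

/-- If `p * A < T * (A + x - T)`, then `p * P < T * (P + x - T)` for all `P ≥ A`. -/
theorem mul_add_sq_lt_of_le {A P T p x : ℕ} (hAP : A ≤ P) (hxT : x ≤ T)
    (h : p * A + T * T < T * (A + x)) : p * P + T * T < T * (P + x) := by
  obtain ⟨d, rfl⟩ := Nat.exists_eq_add_of_le hAP
  have hpT : p ≤ T := by
    by_contra! hlt
    nlinarith [Nat.mul_le_mul_right A hlt.le, Nat.mul_le_mul_left T hxT]
  nlinarith [Nat.mul_le_mul_right d hpT]

theorem exchangeable_of_gapTest {A P Q T : ℕ} {exempt : ℕ → ℕ → Bool} {l : List ℕ} (hTA : T < A)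
    (hAP : A ≤ P) (hPQ : P ≤ Q) (hl : ∀ p ∈ l, p.Prime) (h : gapTest A Q T exempt 0 l = true)
    (hexempt : ∀ a p, exempt a p = true → ∀ q₁ q₂, q₁.Prime → q₂.Prime → q₁ < q₂ → P < q₁ ^ 2 →
      q₂ ≤ T → P + a < q₁ + q₂ → p * P < q₁ * q₂) :
    Exchangeable P T := by
  intro q₁ q₂ hq₁ hq₂ hlt hsq hqT hsum
  obtain ⟨p, hp, hpQ, hxp, hgap | ⟨a, hax, ha⟩⟩ :=
    gapTest_spec h (x := q₁ + q₂ - P) (by omega) (by omega)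
  · refine ⟨p, hl p hp, by omega, by omega, ?_⟩
    have hmul := mul_add_sq_lt_of_le hAP (by omega) hgap
    have hle := mul_add_le_mul_add_sq (hlt.le.trans hqT) hqT
    rw [Nat.add_sub_cancel' hsum.le] at hmul
    omega
  · exact ⟨p, hl p hp, by omega, by omega,
      hexempt a p ha q₁ q₂ hq₁ hq₂ hlt hsq hqT (by omega)⟩

theorem mul_lt_mul_of_pairTest {P a p q₁ q₂ : ℕ} {l : List ℕ} (h : pairTest P l a p = true)
    (h₁ : q₁ ∈ l) (h₂ : q₂ ∈ l) (hne : q₁ ≠ q₂) (hsum : P + a < q₁ + q₂) : p * P < q₁ * q₂ := by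
  have hpair := List.all_eq_true.1 h q₂ h₂
  rw [Bool.or_eq_true, Nat.blt_eq] at hpair
  rcases hpair with hlt | hall
  · have hle := Nat.mul_le_mul_left q₂ hsum
    rw [Nat.succ_eq_add_one, mul_add] at hle
    linarith [mul_comm q₁ q₂]
  · simpa [hne, hsum.not_ge] using List.all_eq_true.1 hall q₁ h₁

theorem exchangeable_of_pairTest {P t : ℕ} {l : List ℕ} (htP : t < P)
    (hl : ∀ p, p ∈ l ↔ p ∈ primesAboveSqrt P t) (h : gapTest P P t (pairTest P l) 0 l = true) :
    Exchangeable P t := by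
  refine exchangeable_of_gapTest htP le_rfl le_rfl
    (fun p hp => (mem_primesAboveSqrt.1 ((hl p).1 hp)).2.1) h ?_
  intro a p hpair q₁ q₂ hq₁ hq₂ hlt hsq hqt hsum
  have hsq₂ : P < q₂ ^ 2 := hsq.trans_le (Nat.pow_le_pow_left hlt.le 2)
  exact mul_lt_mul_of_pairTest hpair
    ((hl q₁).2 (mem_primesAboveSqrt.2 ⟨hlt.le.trans hqt, hq₁, hsq⟩))
    ((hl q₂).2 (mem_primesAboveSqrt.2 ⟨hqt, hq₂, hsq₂⟩)) hlt.ne hsum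

/-- Checks, for a prime `P`, that the exchange argument with some `t ≈ 0.87 P` proves `Good P n`
whenever `P` divides `landau n`. The list `l` contains the primes below `P`. -/
def exchangeTest (l : List ℕ) (P : ℕ) : Bool := [865, 870, 880, 905].any fun c =>
  force (P * c / 1000) fun t =>
    forceList (l.filter fun q => Nat.ble q t && Nat.blt P (q * q)) fun l =>
      force l.sum fun s => isGood P s && gapTest P P t (pairTest P l) 0 l

theorem good_of_exchangeTest {P n : ℕ} {l : List ℕ} (hP : P.Prime) (hPN : P ∣ landau n)
    (hnodup : l.Nodup) (hl : ∀ p < P, p ∈ l ↔ p.Prime) (h : exchangeTest l P = true) :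
    Good P n := by
  simp only [exchangeTest, force_eq, forceList_eq] at h
  obtain ⟨c, hc, hgood⟩ := List.any_eq_true.1 h
  have hc' : c < 1000 := by
    simp only [List.mem_cons, List.not_mem_nil, or_false] at hc
    omega
  have htP : P * c / 1000 < P := Nat.div_lt_of_lt_mul (by nlinarith [hP.pos])
  set t := P * c / 1000
  set qs := l.filter fun q => Nat.ble q t && Nat.blt P (q * q) with hqs
  have hmem : ∀ p, p ∈ qs ↔ p ∈ primesAboveSqrt P t := fun p => by
    rw [hqs, List.mem_filter, Bool.and_eq_true, Nat.ble_eq, Nat.blt_eq, mem_primesAboveSqrt, sq]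
    constructor
    · exact fun ⟨hp, hpt, hsq⟩ => ⟨hpt, (hl p (by omega)).1 hp, hsq⟩
    · exact fun ⟨hpt, hp, hsq⟩ => ⟨(hl p (by omega)).2 hp, hpt, hsq⟩
  have hsum : ∑ p ∈ primesAboveSqrt P t, p = qs.sum := by
    rw [show primesAboveSqrt P t = qs.toFinset by ext p; rw [List.mem_toFinset, hmem],
      List.sum_toFinset _ (hnodup.filter _), List.map_id']
  rw [Bool.and_eq_true] at hgood
  exact (good_of_isGood hgood.1).mono le_rfl
    (hsum ▸ (exchangeable_of_pairTest htP hmem hgood.2).sum_primesAboveSqrt_le hP hPN htP)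

theorem exchangeTest_of_lt_2000 : (forceList ((List.range 2000).filter isPrime) fun l =>
    l.all fun P => Nat.blt P 468 || exchangeTest l P) = true := by
  decide +kernel

theorem good_of_dvd_landau_of_lt_2000 {P n : ℕ} (hP : P.Prime) (hPN : P ∣ landau n) (hlo : 468 ≤ P)
    (hhi : P < 2000) : Good P n := by
  have hmem : ∀ p < 2000, p ∈ (List.range 2000).filter isPrime ↔ p.Prime := fun p hp => by
    rw [List.mem_filter, List.mem_range, isPrime_iff (by omega), and_iff_right hp]
  have htest := exchangeTest_of_lt_2000
  rw [forceList_eq, List.all_eq_true] at htest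
  have hPtest := htest P ((hmem P hhi).2 hP)
  rw [Bool.or_eq_true, Nat.blt_eq, or_iff_right hlo.not_gt] at hPtest
  exact good_of_exchangeTest hP hPN (List.nodup_range.filter _)
    (fun p hp => hmem p (hp.trans hhi)) hPtest

/-! ### Packed sieve -/

/-- The indicator function of the numbers not divisible by any entry of `ps`. -/
def roughIndicator (ps : List ℕ) (i : ℕ) : ℕ := if ∃ p ∈ ps, p ∣ i then 0 else 1

/-- The packed values at `0, …, N - 1` of `roughIndicator ps`. -/
def sieve (w N : ℕ) : List ℕ → ℕ
  | [] => packOnes w N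
  | p :: ps => force (sieve w N ps) fun X => X - (X &&& packOnes (w * p) ((N + p - 1) / p))

/-- A lower bound for the sum of `(s + i) * x i` over the `m` digits `x i` of `X`. Blocks of length
`m / 2 ^ k` are treated as if all weights were equal to the first one. -/
def weightedDigitSum (w : ℕ) : ℕ → ℕ → ℕ → ℕ → ℕ
  | 0, s, _, X => s * (X % (2 ^ w - 1))
  | k + 1, s, m, X =>
    force (m / 2) fun m' =>
      weightedDigitSum w k s m' (X % 2 ^ (w * m')) +
        weightedDigitSum w k (s + m') (m - m') (X / 2 ^ (w * m'))

theorem roughIndicator_le_one (ps : List ℕ) (i : ℕ) : roughIndicator ps i ≤ 1 := by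
  rw [roughIndicator]
  split_ifs <;> omega

theorem lt_two_pow_of_le_one {w x : ℕ} (hw : 0 < w) (hx : x ≤ 1) : x < 2 ^ w :=
  hx.trans_lt (Nat.one_lt_two_pow hw.ne')

theorem prime_of_roughIndicator_ne_zero {ps : List ℕ} {B i : ℕ} (hps : ∀ p < B, p.Prime → p ∈ ps)
    (hi : 2 ≤ i) (hiB : i < B ^ 2) (h : roughIndicator ps i ≠ 0) : i.Prime := by
  simp only [roughIndicator, ne_eq, ite_eq_left_iff, not_exists, not_and] at h
  by_contra hnp
  have hsq : i.minFac ^ 2 ≤ i := Nat.minFac_sq_le_self (by omega) hnp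
  have hlt : i.minFac < B := lt_of_pow_lt_pow_left₀ 2 (Nat.zero_le B) (hsq.trans_lt hiB)
  have hmem := hps _ hlt (Nat.minFac_prime (by omega))
  exact h fun hrough => absurd (Nat.minFac_dvd i) (hrough _ hmem)

theorem packOnes_eq_pack_dvd {w p : ℕ} (hw : 0 < w) (hp : 0 < p) (N : ℕ) :
    packOnes (w * p) ((N + p - 1) / p) = pack w (fun i => if p ∣ i then 1 else 0) N := by
  have hlt : ∀ j, j < (N + p - 1) / p ↔ p * j < N := fun j => by
    rw [← Nat.succ_le_iff, Nat.le_div_iff_mul_le hp, Nat.succ_mul, mul_comm p]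
    omega
  rw [← pack_one (Nat.mul_pos hw hp), pack, pack]
  simp only [ite_mul, one_mul, zero_mul]
  rw [← Finset.sum_filter]
  refine Finset.sum_nbij' (p * ·) (· / p) ?_ ?_ ?_ ?_ ?_
  · simp [hlt]
  · simp only [Finset.mem_filter, Finset.mem_range, hlt]
    exact fun i hi => (Nat.mul_div_le i p).trans_lt hi.1
  · exact fun j _ => Nat.mul_div_cancel_left j hp
  · exact fun i hi => Nat.mul_div_cancel' (Finset.mem_filter.1 hi).2
  · exact fun j _ => by rw [mul_assoc]

theorem sieve_eq {w : ℕ} {ps : List ℕ} (hw : 0 < w) (N : ℕ) (hps : ∀ p ∈ ps, 0 < p) :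
    sieve w N ps = pack w (roughIndicator ps) N := by
  induction ps with
  | nil =>
    rw [sieve, ← pack_one hw]
    exact pack_congr fun i _ => by simp [roughIndicator]
  | cons p ps ih =>
    rw [List.forall_mem_cons] at hps
    have hrough : ∀ i < N, roughIndicator ps i < 2 ^ w := fun i _ =>
      lt_two_pow_of_le_one hw (roughIndicator_le_one ps i)
    have hdvd : ∀ i < N, (if p ∣ i then 1 else 0) < 2 ^ w := fun i _ =>
      lt_two_pow_of_le_one hw (by split_ifs <;> omega)
    rw [sieve, force_eq, ih hps.2, packOnes_eq_pack_dvd hw hps.1, pack_land hw hrough hdvd,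
      ← pack_sub fun i _ => Nat.and_le_left]
    refine pack_congr fun i _ => ?_
    simp only [roughIndicator, List.exists_mem_cons_iff]
    by_cases hp : p ∣ i <;> by_cases hex : ∃ q ∈ ps, q ∣ i <;> simp [hp, hex]

theorem weightedDigitSum_le {w : ℕ} {f : ℕ → ℕ} {m : ℕ} (hf : ∀ i < m, f i < 2 ^ w) (k s : ℕ) :
    weightedDigitSum w k s m (pack w f m) ≤ ∑ i ∈ Finset.range m, (s + i) * f i := by
  induction k generalizing f m s with
  | zero =>
    calc s * (pack w f m % (2 ^ w - 1))
        ≤ s * ∑ i ∈ Finset.range m, f i :=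
          Nat.mul_le_mul_left s (pack_mod_two_pow_sub_one_le w f m)
      _ ≤ ∑ i ∈ Finset.range m, (s + i) * f i := by
          rw [Finset.mul_sum]
          exact Finset.sum_le_sum fun i _ => Nat.mul_le_mul_right _ (Nat.le_add_right s i)
  | succ k ih =>
    obtain ⟨m', hm'⟩ : ∃ m', m' = m / 2 := ⟨_, rfl⟩
    obtain ⟨r, rfl⟩ := Nat.exists_eq_add_of_le (show m' ≤ m by omega)
    rw [weightedDigitSum, force_eq, ← hm', pack_mod hf (Nat.le_add_right m' r),
      pack_div hf (Nat.le_add_right m' r), Finset.sum_range_add, Nat.add_sub_cancel_left]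
    simp only [← add_assoc]
    exact Nat.add_le_add (ih (fun i hi => hf i (by omega)) s)
      (ih (fun i hi => hf (m' + i) (by omega)) (s + m'))

theorem sum_mul_roughIndicator_le {ps : List ℕ} {B P T : ℕ} (hps : ∀ p < B, p.Prime → p ∈ ps)
    (hB : 2 ≤ B) (hT : T < B ^ 2) (hP : P < B ^ 2) :
    ∑ i ∈ Finset.Ico B (T + 1), i * roughIndicator ps i ≤ ∑ p ∈ primesAboveSqrt P T, p := by
  calc ∑ i ∈ Finset.Ico B (T + 1), i * roughIndicator ps i
      ≤ ∑ i ∈ (Finset.Ico B (T + 1)).filter (roughIndicator ps · ≠ 0), i := by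
        rw [Finset.sum_filter]
        refine Finset.sum_le_sum fun i _ => ?_
        split_ifs with h
        · exact (Nat.mul_le_mul_left i (roughIndicator_le_one ps i)).trans_eq (mul_one i)
        · simp [not_not.1 h]
    _ ≤ ∑ p ∈ primesAboveSqrt P T, p := by
        refine Finset.sum_le_sum_of_subset fun i hi => ?_
        obtain ⟨hi, h⟩ := Finset.mem_filter.1 hi
        obtain ⟨hBi, hiT⟩ := Finset.mem_Ico.1 hi
        exact mem_primesAboveSqrt.2 ⟨by omega, prime_of_roughIndicator_ne_zero hps (by omega)
          (by omega) h, hP.trans_le (Nat.pow_le_pow_left hBi 2)⟩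

/-! ### Exchange tests along a sieve -/

/-- Primes with relative gaps so small that each `P ≥ 2000` is `Exchangeable` up to `0.88 P`, as
long as `2 * 0.88 P - P` stays below the last entry. -/
def exchangeChain : List ℕ := [
  211, 397, 541, 547, 557, 563, 571, 577, 587, 593, 601, 607, 617, 619, 631, 641, 647, 653, 661,
  673, 683, 691, 701, 709, 719, 727, 739, 751, 761, 773, 787, 797, 811, 823, 829, 839, 853, 863,
  877, 887, 907, 919, 929, 941, 953, 967, 983, 997, 1013, 1031, 1049, 1063, 1069, 1087, 1103, 1117,
  1129, 1151, 1171, 1187, 1201, 1217, 1237, 1259, 1279, 1301, 1321, 1327, 1361, 1381, 1399, 1423,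
  1447, 1471, 1493, 1511, 1531, 1553, 1579, 1607, 1627, 1637, 1663, 1669, 1699, 1723, 1753, 1783,
  1811, 1831, 1861, 1889, 1913, 1933, 1951, 1979, 2011, 2039, 2069, 2099, 2131, 2161, 2179, 2213,
  2251, 2287, 2311, 2351, 2393, 2423, 2459, 2503, 2543, 2579, 2621, 2663, 2707, 2753, 2801, 2851,
  2897, 2939, 2971, 3023, 3067, 3121, 3169, 3221, 3271, 3329, 3373, 3433, 3491, 3547, 3607, 3671,
  3733, 3797, 3863, 3931, 4001, 4073, 4139, 4211, 4283, 4357, 4423, 4493, 4567, 4649, 4729, 4813,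
  4889, 4973, 5059, 5147, 5237, 5323, 5417, 5507, 5591, 5689, 5791, 5881, 5981, 6079, 6173, 6277,
  6389, 6491, 6607, 6719, 6833, 6949, 7069, 7193, 7321, 7451, 7583, 7717, 7853, 7993, 8123, 8269,
  8389, 8539, 8689, 8839, 8971, 9127, 9283, 9439, 9601, 9769, 9941, 10111, 10289, 10463, 10651,
  10837, 11027, 11213, 11411, 11597, 11801, 12011, 12227, 12437, 12659, 12853, 13063, 13297, 13523,
  13763, 14009, 14251, 14503, 14759, 15017, 15287, 15559, 15823, 16103, 16381, 16673, 16963, 17257,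
  17551, 17863, 18181, 18503, 18803, 19141, 19483, 19819, 20173, 20533, 20899, 21269, 21649, 22037,
  22433, 22817, 23227, 23633, 24049, 24481, 24919, 25367, 25819, 26267, 26737, 27211, 27697, 28183,
  28687, 29201, 29723, 30253, 30781, 31333, 31891, 32443, 33023, 33617, 34217, 34819, 35437, 36073,
  36721, 37379, 38047, 38729, 39419, 40127, 40849, 41579, 42323, 43067, 43801, 44587, 45389, 46199,
  47017, 47857, 48679, 49549, 50423, 51329, 52249, 53189, 54139, 55109, 56099, 57107, 58129, 59167,
  60223, 61297, 62383, 63499, 64633, 65789, 66973, 68171, 69389, 70627, 71887, 73141, 74453, 75793,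
  77153, 78541, 79943, 81373, 82837, 84319, 85831, 87359, 88919, 90511, 92119, 93763, 95443, 97159,
  98899, 100673, 102481, 104323, 106189, 108089, 110023, 111997, 114001, 116047, 118127, 120247,
  122401, 124601, 126839, 129121, 131441, 133801, 136207, 138647, 141131, 143669, 146249, 148873,
  151549, 154267, 157037, 159857, 162731, 165653, 168631, 171659, 174737, 177841, 181039, 184291,
  187597, 190921, 194353, 197837, 201389, 204983, 208667, 212423, 216233, 220123, 224071, 228103,
  232207, 236381, 240631, 244957, 249341, 253823, 258389, 263023, 267749, 272567, 277429, 282413,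
  287491, 292661, 297911, 303271, 308723, 314267, 319919, 325673, 331523, 337489, 343561, 349729,
  356023, 362431, 368947, 375569, 382303, 389173, 396173, 403301, 410551, 417931, 425443, 433099,
  440893, 448829, 456901, 465119, 473479, 481997, 490663, 499493, 508477, 517619, 526931, 536407,
  546053, 555871, 565867, 576049, 586403, 596941, 607681, 618619, 629747, 641077, 652609, 664331,
  676279, 688451, 700837, 713417, 726221, 739283, 752581, 766127, 779899, 793931, 808217, 822763,
  837533, 852589, 867913, 883517, 899413, 915601, 932081, 948853, 965927, 983299, 1000981, 1018993,
  1037329, 1055981, 1074977, 1094321, 1113997, 1134047, 1154449, 1175219, 1196359, 1217893,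
  1239803, 1262119, 1284823, 1307927, 1331443, 1355401, 1379797, 1404617, 1429889, 1455613,
  1481801, 1508473, 1535621, 1580141, 1625951, 1673099, 1721593, 1771507, 1822871, 1875707,
  1930099, 1986071, 2043647, 2102897, 2163881, 2226619, 2291189, 2357629, 2425991, 2496323,
  2568703, 2643181, 2719811, 2798669, 2879819, 2963333, 3049261, 3137681, 3228661, 3322279,
  3418619, 3517753, 3619723, 3724667, 3832679, 3943799, 4058167, 4175837, 4296917, 4421507,
  4549711, 4681639, 4817399, 4957103, 5100841, 5248759, 5400973, 5557579, 5718737, 5884577,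
  6055223, 6230821, 6411469, 6597401, 6788699, 6985553, 7188119, 7396553, 7611047, 7831763,
  8058881, 8292577, 8533061, 8780509, 9035111, 9297109, 9566719, 9844129, 10129597]

theorem prime_of_coprime_factorial {b n : ℕ} (hn : 2 ≤ n) (hb : n < (b + 1) ^ 2)
    (h : n.Coprime b.factorial) : n.Prime := by
  by_contra hnp
  have hsq : n.minFac ^ 2 ≤ n := Nat.minFac_sq_le_self (by omega) hnp
  have hle : n.minFac ≤ b :=
    Nat.lt_succ_iff.1 (lt_of_pow_lt_pow_left₀ 2 (Nat.zero_le _) (hsq.trans_lt hb))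
  have hmin := Nat.minFac_prime (n := n) (by omega)
  exact Nat.not_coprime_of_dvd_of_dvd hmin.one_lt (Nat.minFac_dvd n)
    (Nat.dvd_factorial hmin.pos hle) h

theorem exchangeChain_isPrime_or_coprime : (force (Nat.factorial 3182) fun F =>
    exchangeChain.all fun p => bif Nat.blt p 10000 then isPrime p else
      Nat.blt p (3183 * 3183) && Nat.beq (Nat.gcd p F) 1) = true := by
  decide +kernel

theorem prime_of_mem_exchangeChain {p : ℕ} (hp : p ∈ exchangeChain) : p.Prime := by
  have h := exchangeChain_isPrime_or_coprime
  rw [force_eq, List.all_eq_true] at h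
  have hp := h p hp
  rcases hlt : Nat.blt p 10000 with _ | _ <;> rw [hlt] at hp
  · rw [cond_false, Bool.and_eq_true, Nat.blt_eq, Nat.beq_eq] at hp
    rw [← Bool.not_eq_true, Nat.blt_eq] at hlt
    exact prime_of_coprime_factorial (by omega) (by omega) hp.2
  · exact (isPrime_iff (Nat.blt_eq ▸ hlt)).1 hp

/-- Checks that all `P` with `A ≤ P ≤ Q` are `Exchangeable` up to `T` and `Good` for all
`n ≥ acc`. -/
def rangeTest (A Q T acc : ℕ) : Bool :=
  Nat.blt T A && isGood Q acc && gapTest A Q T (fun _ _ => false) 0 exchangeChain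

/-- Covers the `P` with `A ≤ P < M` by intervals `[A', Q]` with `Q ≈ 1.025 A'` and applies
`rangeTest` to these with `T ≈ 0.88 A'`. The vector `X` holds the values at `s, s + 1, …, N - 1` of
the indicator function of the primes in `[B, N)`, and `acc` is at most the sum of the primes in
`[B, s)`. -/
def sieveWalk (N B M : ℕ) : ℕ → ℕ → ℕ → ℕ → ℕ → Bool
  | 0, _, _, _, _ => false
  | k + 1, A, s, X, acc => Nat.ble M A ||
    force (A * 880 / 1000) fun T => force (A * 1025 / 1000) fun Q =>
      force (8 * (T + 1 - s)) fun e =>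
        force (acc + weightedDigitSum 8 7 s (T + 1 - s) (X % 2 ^ e)) fun acc =>
          Nat.ble s T && Nat.blt T N && Nat.blt Q (B * B) && rangeTest A Q T acc &&
            force (X / 2 ^ e) fun X => sieveWalk N B M k (Q + 1) (T + 1) X acc

theorem good_of_rangeTest {n A P Q T acc : ℕ} (hP : P.Prime) (hPN : P ∣ landau n) (hAP : A ≤ P)
    (hPQ : P ≤ Q) (hacc : acc ≤ ∑ p ∈ primesAboveSqrt P T, p) (h : rangeTest A Q T acc = true) :
    Good P n := by
  rw [rangeTest, Bool.and_eq_true, Bool.and_eq_true, Nat.blt_eq] at h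
  obtain ⟨⟨hTA, hgood⟩, hgap⟩ := h
  have hex : Exchangeable P T := exchangeable_of_gapTest hTA hAP hPQ
    (fun _ => prime_of_mem_exchangeChain) hgap (by simp)
  exact (good_of_isGood hgood).mono hPQ
    (hacc.trans (hex.sum_primesAboveSqrt_le hP hPN (hTA.trans_le hAP)))

theorem good_of_sieveWalk {n N B M P k A s acc : ℕ} {ps : List ℕ} (hP : P.Prime)
    (hPN : P ∣ landau n) (hPM : P < M) (hps : ∀ p < B, p.Prime → p ∈ ps) (hB : 2 ≤ B)
    (hNB : N ≤ B ^ 2) (hBs : B ≤ s) (hacc : acc ≤ ∑ i ∈ Finset.Ico B s, i * roughIndicator ps i)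
    (hAP : A ≤ P)
    (h : sieveWalk N B M k A s (pack 8 (fun i => roughIndicator ps (s + i)) (N - s)) acc = true) :
    Good P n := by
  induction k generalizing A s acc with
  | zero => exact absurd h Bool.false_ne_true
  | succ k ih =>
    simp only [sieveWalk, force_eq, Bool.or_eq_true, Bool.and_eq_true, Nat.ble_eq, Nat.blt_eq] at h
    obtain ⟨⟨⟨⟨hsT, hTN⟩, hQB⟩, htest⟩, hwalk⟩ := h.resolve_left (hAP.trans_lt hPM).not_ge
    set T := A * 880 / 1000
    set Q := A * 1025 / 1000
    obtain ⟨m, hm⟩ := Nat.exists_eq_add_of_le (show s ≤ T + 1 by omega)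
    rw [hm, Nat.add_sub_cancel_left] at hwalk htest
    have hdigit : ∀ i < N - s, roughIndicator ps (s + i) < 2 ^ 8 := fun i _ =>
      lt_two_pow_of_le_one (by norm_num) (roughIndicator_le_one ps _)
    rw [pack_mod hdigit (by omega)] at hwalk htest
    rw [pack_div hdigit (by omega)] at hwalk
    have hacc' : acc + weightedDigitSum 8 7 s m (pack 8 (fun i => roughIndicator ps (s + i)) m) ≤
        ∑ i ∈ Finset.Ico B (s + m), i * roughIndicator ps i := by
      rw [← Finset.sum_Ico_consecutive _ hBs (Nat.le_add_right s m),
        Finset.sum_Ico_eq_sum_range _ s, Nat.add_sub_cancel_left]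
      exact Nat.add_le_add hacc (weightedDigitSum_le (fun i hi => hdigit i (by omega)) 7 s)
    rcases le_or_gt P Q with hPQ | hQP
    · refine good_of_rangeTest hP hPN hAP hPQ (hacc'.trans ?_) htest
      rw [← hm]
      exact sum_mul_roughIndicator_le hps hB (hTN.trans_le hNB) (by rw [sq]; omega)
    · rw [Nat.sub_sub] at hwalk
      exact ih (Nat.le_add_right_of_le hBs) hacc' hQP (by simpa only [add_assoc] using hwalk)

/-- Runs `sieveWalk` from `A`, after sieving by the primes below `B < 10000`. -/
def sieveTest (N B A M : ℕ) : Bool :=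
  Nat.ble 2 B && Nat.ble B 10000 && Nat.ble B N && Nat.ble N (B * B) &&
    force (sieve 8 N ((List.range B).filter isPrime)) fun X =>
      force (X / 2 ^ (8 * B)) fun X => sieveWalk N B M 200 A B X 0

theorem good_of_sieveTest {n N B A M P : ℕ} (h : sieveTest N B A M = true) (hP : P.Prime)
    (hPN : P ∣ landau n) (hAP : A ≤ P) (hPM : P < M) : Good P n := by
  simp only [sieveTest, force_eq, Bool.and_eq_true, Nat.ble_eq] at h
  obtain ⟨⟨⟨⟨hB, hB'⟩, hBN⟩, hNB⟩, hwalk⟩ := h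
  set ps := (List.range B).filter isPrime with hps
  have hmem : ∀ p, p ∈ ps ↔ p < B ∧ p.Prime := fun p => by
    rw [hps, List.mem_filter, List.mem_range]
    exact and_congr_right fun hp => isPrime_iff (by omega)
  rw [sieve_eq (by norm_num) N fun p hp => ((hmem p).1 hp).2.pos, pack_div
    (fun i _ => lt_two_pow_of_le_one (by norm_num) (roughIndicator_le_one ps i)) hBN] at hwalk
  exact good_of_sieveWalk hP hPN hPM (fun p hp hpp => (hmem p).2 ⟨hp, hpp⟩) hB (by rwa [sq]) le_rfl
    (Nat.zero_le _) hAP hwalk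

theorem sieveTest_2000_9700 : sieveTest 8500 100 2000 9700 = true := by decide +kernel

theorem sieveTest_9700_98000 : sieveTest 85100 320 9700 98000 = true := by decide +kernel

theorem sieveTest_98000_2004328 : sieveTest 1754400 1440 98000 2004328 = true := by decide +kernel

theorem good_of_dvd_landau_of_lt_2004328 {n P : ℕ} (hP : P.Prime) (hPN : P ∣ landau n)
    (hlo : 2000 ≤ P) (hhi : P < 2004328) : Good P n := by
  rcases lt_or_ge P 9700 with h₁ | h₁
  · exact good_of_sieveTest sieveTest_2000_9700 hP hPN hlo h₁
  rcases lt_or_ge P 98000 with h₂ | h₂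
  · exact good_of_sieveTest sieveTest_9700_98000 hP hPN h₁ h₂
  · exact good_of_sieveTest sieveTest_98000_2004328 hP hPN h₂ hhi

/-! ### Chebyshev's method -/

section FactorialSums

open ArithmeticFunction

theorem log_factorial_eq_sum_vonMangoldt {m N : ℕ} (hmN : m ≤ N) :
    Real.log (m.factorial : ℝ) = ∑ n ∈ Finset.Ioc 0 N, vonMangoldt n * ((m / n : ℕ) : ℝ) := by
  induction m with
  | zero => simp
  | succ m ih =>
    have hdivisors : (m + 1).divisors = (Finset.Ioc 0 N).filter (· ∣ m + 1) := by
      ext n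
      simp only [Nat.mem_divisors, Finset.mem_filter, Finset.mem_Ioc]
      refine ⟨fun ⟨hd, _⟩ => ⟨⟨Nat.pos_of_dvd_of_pos hd m.succ_pos, ?_⟩, hd⟩,
        fun ⟨_, hd⟩ => ⟨hd, m.succ_ne_zero⟩⟩
      exact (Nat.le_of_dvd m.succ_pos hd).trans hmN
    rw [Nat.factorial_succ, Nat.cast_mul, Real.log_mul (by positivity) (by positivity),
      ih (by omega), ← vonMangoldt_sum, hdivisors, Finset.sum_filter, ← Finset.sum_add_distrib]
    refine Finset.sum_congr rfl fun n _ => ?_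
    rw [Nat.succ_div]
    split_ifs <;> push_cast <;> ring

theorem psi_div_eq_sum_vonMangoldt {k : ℕ} (hk : 1 ≤ k) (x : ℕ) :
    Chebyshev.psi ((x / k : ℕ) : ℝ)
      = ∑ n ∈ Finset.Ioc 0 x, vonMangoldt n * if k ≤ x / n then 1 else 0 := by
  have hIoc : Finset.Ioc 0 (x / k) = (Finset.Ioc 0 x).filter (k ≤ x / ·) := by
    ext n
    simp only [Finset.mem_filter, Finset.mem_Ioc]
    have hswap (hn : 0 < n) : k ≤ x / n ↔ n ≤ x / k := by
      rw [Nat.le_div_iff_mul_le hn, Nat.le_div_iff_mul_le hk, mul_comm]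
    exact ⟨fun ⟨hn, hnk⟩ => ⟨⟨hn, hnk.trans (Nat.div_le_self _ _)⟩, (hswap hn).2 hnk⟩,
      fun ⟨⟨hn, _⟩, hkn⟩ => ⟨hn, (hswap hn).1 hkn⟩⟩
  rw [Chebyshev.psi, Nat.floor_natCast, hIoc, Finset.sum_filter]
  exact Finset.sum_congr rfl fun n _ => by split_ifs <;> simp

/-- The function `y ↦ ∑ d * c * ⌊y / d⌋ + ∑ v * 1[k ≤ y]`, over the pairs `(d, c)` of `l` and
`(k, v)` of `U`. Its sum over `y = ⌊x / n⌋` against the von Mangoldt function combines values of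
`log ⌊x / d⌋!` and of `ψ (x / k)`. -/
def profile (l U : List (ℕ × ℕ)) (y : ℕ) : ℕ :=
  (l.map fun p => p.1 * p.2 * (y / p.1)).sum + (U.map fun u => if u.1 ≤ y then u.2 else 0).sum

/-- The combination `∑ d * c * log ⌊x / d⌋!` over the pairs `(d, c)` of `l`. -/
noncomputable def factorialSum (l : List (ℕ × ℕ)) (x : ℕ) : ℝ :=
  (l.map fun p => (p.1 * p.2 : ℝ) * Real.log ((x / p.1).factorial : ℝ)).sum

/-- The combination `∑ v * ψ ⌊x / k⌋` over the pairs `(k, v)` of `U`. -/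
noncomputable def psiSum (U : List (ℕ × ℕ)) (x : ℕ) : ℝ :=
  (U.map fun u => (u.2 : ℝ) * Chebyshev.psi ((x / u.1 : ℕ) : ℝ)).sum

theorem factorialSum_eq_sum_vonMangoldt (l : List (ℕ × ℕ)) (x : ℕ) :
    factorialSum l x = ∑ n ∈ Finset.Ioc 0 x,
      vonMangoldt n * ((l.map fun p => p.1 * p.2 * (x / n / p.1)).sum : ℕ) := by
  induction l with
  | nil => simp [factorialSum]
  | cons p l ih =>
    simp only [factorialSum, List.map_cons, List.sum_cons, Nat.cast_add, mul_add,
      Finset.sum_add_distrib] at ih ⊢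
    rw [ih, log_factorial_eq_sum_vonMangoldt (Nat.div_le_self x p.1), Finset.mul_sum]
    congr 1
    refine Finset.sum_congr rfl fun n _ => ?_
    rw [Nat.div_div_eq_div_mul, mul_comm p.1 n, ← Nat.div_div_eq_div_mul]
    push_cast
    ring

theorem psiSum_eq_sum_vonMangoldt {U : List (ℕ × ℕ)} (hU : ∀ u ∈ U, 1 ≤ u.1) (x : ℕ) :
    psiSum U x = ∑ n ∈ Finset.Ioc 0 x,
      vonMangoldt n * ((U.map fun u => if u.1 ≤ x / n then u.2 else 0).sum : ℕ) := by
  induction U with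
  | nil => simp [psiSum]
  | cons u U ih =>
    simp only [psiSum, List.map_cons, List.sum_cons, Nat.cast_add, mul_add,
      Finset.sum_add_distrib] at ih ⊢
    rw [ih fun v hv => hU v (List.mem_cons_of_mem _ hv),
      psi_div_eq_sum_vonMangoldt (hU u List.mem_cons_self), Finset.mul_sum]
    congr 1
    refine Finset.sum_congr rfl fun n _ => ?_
    split_ifs <;> simp [mul_comm]

theorem factorialSum_add_psiSum_le {l U l' U' : List (ℕ × ℕ)} (hU : ∀ u ∈ U, 1 ≤ u.1)
    (hU' : ∀ u ∈ U', 1 ≤ u.1) (h : ∀ y, profile l U y ≤ profile l' U' y) (x : ℕ) :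
    factorialSum l x + psiSum U x ≤ factorialSum l' x + psiSum U' x := by
  simp only [factorialSum_eq_sum_vonMangoldt, psiSum_eq_sum_vonMangoldt hU,
    psiSum_eq_sum_vonMangoldt hU', ← Finset.sum_add_distrib, ← mul_add, ← Nat.cast_add]
  exact Finset.sum_le_sum fun n _ =>
    mul_le_mul_of_nonneg_left (Nat.cast_le.2 (h (x / n))) vonMangoldt_nonneg

end FactorialSums

theorem log_factorial_le {m : ℕ} (hm : 1 ≤ m) :
    Real.log (m.factorial : ℝ) ≤ m * Real.log m - m + Real.log m + 1 := by
  induction m, hm using Nat.le_induction with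
  | base => simp
  | succ m hm ih =>
    have : (0 : ℝ) < m := by exact_mod_cast hm
    have hstep : 1 ≤ ((m : ℝ) + 1) * (Real.log (m + 1) - Real.log m) := by
      have hlog := Real.one_sub_inv_le_log_of_pos (show (0 : ℝ) < (m + 1) / m by positivity)
      rw [Real.log_div (by positivity) (by positivity), inv_div] at hlog
      calc (1 : ℝ) = (m + 1) * (1 - m / (m + 1)) := by field_simp; ring
        _ ≤ _ := mul_le_mul_of_nonneg_left hlog (by positivity)
    rw [Nat.factorial_succ, Nat.cast_mul, Real.log_mul (by positivity) (by positivity)]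
    push_cast
    linarith

theorem le_log_factorial {m : ℕ} (hm : 1 ≤ m) :
    m * Real.log m - m ≤ Real.log (m.factorial : ℝ) := by
  have hstirling := Stirling.le_log_factorial_stirling (n := m) (by omega)
  have hm0 : 0 ≤ Real.log m := Real.log_natCast_nonneg m
  have hpi : 0 ≤ Real.log (2 * Real.pi) := Real.log_nonneg (by linarith [Real.two_le_pi])
  linarith

theorem sub_le_mul_log_sub_log {a b : ℝ} (ha : 0 < a) (hb : 0 < b) :
    a - b ≤ a * (Real.log a - Real.log b) := by
  have hlog := Real.one_sub_inv_le_log_of_pos (div_pos ha hb)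
  rw [Real.log_div ha.ne' hb.ne', inv_div] at hlog
  calc a - b = a * (1 - b / a) := by field_simp
    _ ≤ _ := mul_le_mul_of_nonneg_left hlog ha.le

theorem abs_log_factorial_floor_sub_le {z : ℝ} (hz : 1 ≤ z) :
    |Real.log ((⌊z⌋₊).factorial : ℝ) - (z * Real.log z - z)| ≤ Real.log z + 1 := by
  set m := ⌊z⌋₊
  have hm : 1 ≤ m := Nat.one_le_floor_iff _ |>.2 hz
  have hm1 : (1 : ℝ) ≤ m := by exact_mod_cast hm
  have hmz : (m : ℝ) ≤ z := Nat.floor_le (by linarith)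
  have hzm : z < m + 1 := Nat.lt_floor_add_one z
  have hlogm : 0 ≤ Real.log m := Real.log_nonneg hm1
  have hlog : Real.log m ≤ Real.log z := Real.log_le_log (by linarith) hmz
  have hupper := log_factorial_le hm
  have hlower := le_log_factorial hm
  have hzlog := sub_le_mul_log_sub_log (show 0 < z by linarith) (show (0 : ℝ) < m by linarith)
  have hmlog := sub_le_mul_log_sub_log (show (0 : ℝ) < m by linarith) (show 0 < z by linarith)
  have hfract : 0 ≤ (z - m) * Real.log m := mul_nonneg (by linarith) hlogm
  have hfract' : (z - m) * Real.log z ≤ 1 * Real.log z :=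
    mul_le_mul_of_nonneg_right (by linarith) (by linarith)
  rw [abs_le]
  constructor <;> nlinarith

/-- The sum of the coefficients `c` of a list of pairs `(d, c)`. -/
def coeffSum (l : List (ℕ × ℕ)) : ℕ := (l.map Prod.snd).sum

/-- The sum `∑ d * c` over a list of pairs `(d, c)`. -/
def weight (l : List (ℕ × ℕ)) : ℕ := (l.map fun p => p.1 * p.2).sum

/-- The sum `∑ c * log d` over a list of pairs `(d, c)`. -/
noncomputable def coeffLogSum (l : List (ℕ × ℕ)) : ℝ := (l.map fun p => p.2 * Real.log p.1).sum

theorem abs_factorialSum_sub_le {l : List (ℕ × ℕ)} {x : ℕ} (hl : ∀ p ∈ l, 1 ≤ p.1 ∧ p.1 ≤ x) :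
    |factorialSum l x - x * ((Real.log x - 1) * coeffSum l - coeffLogSum l)|
      ≤ weight l * (Real.log x + 1) := by
  induction l with
  | nil => simp [factorialSum, coeffSum, coeffLogSum, weight]
  | cons p l ih =>
    obtain ⟨d, c⟩ := p
    obtain ⟨hd, hdx⟩ := hl (d, c) List.mem_cons_self
    have hd0 : (0 : ℝ) < d := by exact_mod_cast hd
    have hx0 : (0 : ℝ) < x := by exact_mod_cast hd.trans hdx
    have hstirling := abs_log_factorial_floor_sub_le
      (show (1 : ℝ) ≤ x / d by rw [one_le_div hd0]; exact_mod_cast hdx)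
    rw [Nat.floor_div_eq_div] at hstirling
    have hlog : Real.log ((x : ℝ) / d) ≤ Real.log x :=
      Real.log_le_log (by positivity) (div_le_self hx0.le (by exact_mod_cast hd))
    calc |factorialSum ((d, c) :: l) x
          - x * ((Real.log x - 1) * coeffSum ((d, c) :: l) - coeffLogSum ((d, c) :: l))|
        = |d * c * (Real.log ((x / d).factorial : ℝ) - (x / d * Real.log (x / d) - x / d))
          + (factorialSum l x - x * ((Real.log x - 1) * coeffSum l - coeffLogSum l))| := by
          simp only [factorialSum, coeffSum, coeffLogSum, List.map_cons, List.sum_cons,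
            Real.log_div hx0.ne' hd0.ne']
          push_cast
          congr 1
          field_simp
          ring
      _ ≤ d * c * (Real.log x + 1) + weight l * (Real.log x + 1) := by
          refine (abs_add_le _ _).trans (add_le_add ?_ (ih fun q hq => hl q (by simp [hq])))
          rw [abs_mul, abs_of_nonneg (by positivity : (0 : ℝ) ≤ d * c)]
          exact mul_le_mul_of_nonneg_left (by linarith) (by positivity)
      _ = weight ((d, c) :: l) * (Real.log x + 1) := by
          simp only [weight, List.map_cons, List.sum_cons]
          push_cast
          ring

/-- Since `l` and `l'` have the same coefficient sum, the terms of order `x * log x` in their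
factorial sums cancel. -/
theorem mul_coeffLogSum_sub_add_psiSum_le {l U l' U' : List (ℕ × ℕ)} {x : ℕ}
    (hl : ∀ p ∈ l, 1 ≤ p.1 ∧ p.1 ≤ x) (hl' : ∀ p ∈ l', 1 ≤ p.1 ∧ p.1 ≤ x)
    (hU : ∀ u ∈ U, 1 ≤ u.1) (hU' : ∀ u ∈ U', 1 ≤ u.1) (hc : coeffSum l = coeffSum l')
    (h : ∀ y, profile l U y ≤ profile l' U' y) :
    x * (coeffLogSum l' - coeffLogSum l) + psiSum U x
      ≤ psiSum U' x + (weight l + weight l') * (Real.log x + 1) := by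
  have hle := factorialSum_add_psiSum_le hU hU' h x
  have hlower := (abs_le.1 (abs_factorialSum_sub_le hl)).1
  have hupper := (abs_le.1 (abs_factorialSum_sub_le hl')).2
  rw [hc] at hlower
  linarith

section ProfileTest

variable {w n : ℕ} {l U l' U' : List (ℕ × ℕ)}

theorem profile_mono {y z : ℕ} (hyz : y ≤ z) : profile l U y ≤ profile l U z := by
  refine add_le_add (List.sum_le_sum fun p _ => ?_) (List.sum_le_sum fun u _ => ?_)
  · exact Nat.mul_le_mul_left _ (Nat.div_le_div_right hyz)
  · split_ifs <;> omega

/-- The increment of `profile l U` at `j`. -/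
def profileStep (l U : List (ℕ × ℕ)) (j : ℕ) : ℕ :=
  (l.map fun p => p.1 * p.2 * ((if p.1 ∣ j then 1 else 0) - if j = 0 then 1 else 0)).sum
    + (U.map fun u => u.2 * if j = u.1 then 1 else 0).sum

theorem profileStep_zero (hU : ∀ u ∈ U, 1 ≤ u.1) : profileStep l U 0 = profile l U 0 := by
  simp only [profileStep, profile]
  congr 1
  · simp
  · congr 1
    refine List.map_congr_left fun u hu => ?_
    have := hU u hu
    rw [if_neg (by omega), if_neg (by omega), mul_zero]

theorem profile_succ (l U : List (ℕ × ℕ)) (j : ℕ) :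
    profile l U (j + 1) = profile l U j + profileStep l U (j + 1) := by
  rw [profile, profile, profileStep, add_add_add_comm, ← List.sum_map_add, ← List.sum_map_add]
  congr 2
  · refine List.map_congr_left fun p _ => ?_
    simp [Nat.succ_div, mul_add]
  · refine List.map_congr_left fun u _ => ?_
    split_ifs <;> omega

/-- Multiplication by `2 ^ w - 1` is summation by parts: it turns the packed profile into the
packed vector of its increments. -/
theorem pack_profile_mul_add (hU : ∀ u ∈ U, 1 ≤ u.1) (n : ℕ) :
    pack w (profile l U) (n + 1) * (2 ^ w - 1) + pack w (profileStep l U) (n + 1)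
      = 2 ^ (w * (n + 1)) * profile l U n := by
  obtain ⟨c, hc⟩ := Nat.exists_eq_add_of_le (Nat.one_le_two_pow (n := w))
  have hc' : 2 ^ w - 1 = c := by omega
  rw [hc']
  induction n with
  | zero =>
    simp only [pack, zero_add, Finset.sum_range_one, profileStep_zero hU, mul_zero, mul_one, hc]
    ring
  | succ n ih =>
    rw [pack_succ, pack_succ w (profileStep l U), profile_succ]
    calc _ = pack w (profile l U) (n + 1) * c + pack w (profileStep l U) (n + 1)
          + 2 ^ (w * (n + 1)) * (profile l U n * c + profileStep l U (n + 1) * (1 + c)) := by ring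
      _ = 2 ^ (w * (n + 1)) * (1 + c) * (profile l U n + profileStep l U (n + 1)) := by
          rw [ih]
          ring
      _ = _ := by rw [← hc, ← pow_add, ← Nat.mul_succ]

theorem pack_single {k : ℕ} (hk : k < n) :
    pack w (fun j => if j = k then 1 else 0) n = 2 ^ (w * k) := by
  simp [pack, hk]

theorem pack_sum_map {α : Type*} (w : ℕ) (l : List α) (f : α → ℕ → ℕ) (n : ℕ) :
    pack w (fun j => (l.map fun a => f a j).sum) n = (l.map fun a => pack w (f a) n).sum := by
  induction l with
  | nil => simp [pack_zero]
  | cons a l ih => simp only [List.map_cons, List.sum_cons, pack_add, ih]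

/-- `profileStep l U`, packed. -/
def packedProfileStep (w n : ℕ) (l U : List (ℕ × ℕ)) : ℕ :=
  (l.map fun p => p.1 * p.2 * (packOnes (w * p.1) ((n + p.1 - 1) / p.1) - 1)).sum
    + (U.map fun u => u.2 * 2 ^ (w * u.1)).sum

theorem packedProfileStep_eq (hw : 0 < w) (hn : 0 < n) (hl : ∀ p ∈ l, 1 ≤ p.1)
    (hU : ∀ u ∈ U, u.1 < n) : packedProfileStep w n l U = pack w (profileStep l U) n := by
  unfold packedProfileStep profileStep
  rw [pack_add, pack_sum_map, pack_sum_map]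
  congr 2
  · refine List.map_congr_left fun p hp => ?_
    have hone : pack w (fun j => if j = 0 then 1 else 0) n = 1 := by simpa using pack_single hn
    rw [pack_mul, pack_sub fun j _ => by split_ifs <;> simp_all, hone,
      packOnes_eq_pack_dvd hw (hl p hp)]
  · exact List.map_congr_left fun u hu => by rw [pack_mul, pack_single (hU u hu)]

/-- `profile l U`, packed. -/
def packedProfile (w n : ℕ) (l U : List (ℕ × ℕ)) : ℕ :=
  (2 ^ (w * n) * profile l U (n - 1) - packedProfileStep w n l U) / (2 ^ w - 1)

theorem packedProfile_eq (hw : 0 < w) (hn : 0 < n) (hl : ∀ p ∈ l, 1 ≤ p.1)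
    (hU : ∀ u ∈ U, 1 ≤ u.1 ∧ u.1 < n) : packedProfile w n l U = pack w (profile l U) n := by
  obtain ⟨m, rfl⟩ : ∃ m, n = m + 1 := ⟨n - 1, by omega⟩
  have hbase : 2 ≤ 2 ^ w := Nat.le_self_pow hw.ne' 2
  rw [packedProfile, packedProfileStep_eq hw hn hl fun u hu => (hU u hu).2, Nat.add_sub_cancel,
    ← pack_profile_mul_add fun u hu => (hU u hu).1, Nat.add_sub_cancel,
    Nat.mul_div_cancel _ (by omega)]

theorem profile_le_of_le {y : ℕ} (hU : ∀ u ∈ U, u.1 ≤ y) :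
    profile l U y ≤ coeffSum l * y + coeffSum U := by
  refine add_le_add ?_ (List.sum_le_sum fun u hu => by rw [if_pos (hU u hu)])
  rw [coeffSum, ← List.sum_map_mul_right]
  refine List.sum_le_sum fun p _ => ?_
  calc p.1 * p.2 * (y / p.1) = p.2 * (p.1 * (y / p.1)) := by ring
    _ ≤ p.2 * y := Nat.mul_le_mul_left _ (Nat.mul_div_le _ _)

theorem le_profile_of_le {y : ℕ} (hl : ∀ p ∈ l, 1 ≤ p.1) (hU : ∀ u ∈ U, u.1 ≤ y) :
    coeffSum l * y + coeffSum U ≤ profile l U y + (l.map fun p => p.2 * (p.1 - 1)).sum := by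
  have hsteps : coeffSum U = (U.map fun u => if u.1 ≤ y then u.2 else 0).sum :=
    congrArg List.sum (List.map_congr_left fun u hu => (if_pos (hU u hu)).symm)
  have hfloors : coeffSum l * y
      ≤ (l.map fun p => p.1 * p.2 * (y / p.1)).sum + (l.map fun p => p.2 * (p.1 - 1)).sum := by
    rw [coeffSum, ← List.sum_map_mul_right, ← List.sum_map_add]
    refine List.sum_le_sum fun p hp => ?_
    have hlt := Nat.lt_mul_div_succ y (hl p hp)
    rw [Nat.mul_succ] at hlt
    calc p.2 * y ≤ p.2 * (p.1 * (y / p.1) + (p.1 - 1)) := Nat.mul_le_mul_left _ (by omega)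
      _ = _ := by ring
  rw [hsteps, profile]
  omega

/-- A test for `profile l U ≤ profile l' U'`: below `n` it compares packed vectors, from `n` on
it compares the bounds `profile_le_of_le` and `le_profile_of_le`. -/
def profileTest (w n : ℕ) (l U l' U' : List (ℕ × ℕ)) : Bool :=
  (l ++ l').all (fun p => Nat.ble 1 p.1) && (U ++ U').all (fun u => Nat.ble 1 u.1 && Nat.blt u.1 n)
    && Nat.blt 0 n && Nat.blt (profile l U (n - 1)) (2 ^ w)
    && Nat.blt (profile l' U' (n - 1)) (2 ^ w) && Nat.beq (coeffSum l) (coeffSum l')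
    && Nat.ble ((l'.map fun p => p.2 * (p.1 - 1)).sum + coeffSum U) (coeffSum U')
    && force (packedProfile (w + 1) n l U) fun X => force (packedProfile (w + 1) n l' U') fun Y =>
      Nat.beq (packMax w n X Y) Y

theorem profile_le_profile_of_profileTest (h : profileTest w n l U l' U' = true) (y : ℕ) :
    profile l U y ≤ profile l' U' y := by
  simp only [profileTest, Bool.and_eq_true, List.all_eq_true, List.mem_append, Nat.ble_eq,
    Nat.blt_eq, Nat.beq_eq, force_eq] at h
  obtain ⟨⟨⟨⟨⟨⟨⟨hl, hU⟩, hn⟩, hlt⟩, hlt'⟩, hc⟩, htail⟩, hmax⟩ := h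
  by_cases hy : y < n
  · have hf : ∀ i < n, profile l U i < 2 ^ w := fun i hi =>
      (profile_mono (by omega)).trans_lt hlt
    have hg : ∀ i < n, profile l' U' i < 2 ^ w := fun i hi =>
      (profile_mono (by omega)).trans_lt hlt'
    have hpow : 2 ^ w ≤ 2 ^ (w + 1) := Nat.pow_le_pow_right two_pos w.le_succ
    rw [packedProfile_eq w.succ_pos hn (fun p hp => hl p (.inl hp)) (fun u hu => hU u (.inl hu)),
      packedProfile_eq w.succ_pos hn (fun p hp => hl p (.inr hp)) (fun u hu => hU u (.inr hu)),
      packMax_eq hf hg] at hmax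
    exact max_eq_right_iff.1 <| pack_inj
      (fun i hi => (max_lt (hf i hi) (hg i hi)).trans_le hpow)
      (fun i hi => (hg i hi).trans_le hpow) hmax hy
  · have hle := profile_le_of_le (l := l) (U := U) (y := y) fun u hu => by
      have := (hU u (.inl hu)).2
      omega
    have hge := le_profile_of_le (l := l') (U := U') (y := y) (fun p hp => hl p (.inr hp))
      fun u hu => by
        have := (hU u (.inr hu)).2
        omega
    rw [hc] at hle
    omega

end ProfileTest

theorem mul_log_le_log2_pow_succ {m : ℕ} (hm : m ≠ 0) (k : ℕ) :
    k * Real.log m ≤ (Nat.log2 (m ^ k) + 1 : ℕ) * Real.log 2 := by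
  rw [← Real.log_pow, ← Real.log_pow]
  refine Real.log_le_log (by positivity) ?_
  exact_mod_cast (Nat.lt_log2_self (n := m ^ k)).le

/-- The number `⌊log₂ (d ^ 2 ^ j)⌋`, computed by repeated squaring so that the kernel evaluates it
quickly. -/
def log2PowTwoPow (d : ℕ) : ℕ → ℕ
  | 0 => Nat.log2 d
  | j + 1 => force (log2PowTwoPow d j) fun t =>
      bif Nat.ble (2 ^ (2 * t + 1)) (d ^ 2 ^ (j + 1)) then 2 * t + 1 else 2 * t

theorem log2PowTwoPow_eq {d : ℕ} (hd : d ≠ 0) (j : ℕ) :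
    log2PowTwoPow d j = Nat.log2 (d ^ 2 ^ j) := by
  induction j with
  | zero => simp [log2PowTwoPow]
  | succ j ih =>
    have hsq : d ^ 2 ^ (j + 1) = (d ^ 2 ^ j) ^ 2 := by rw [← pow_mul, pow_succ]
    have hlower : (2 ^ log2PowTwoPow d j) ^ 2 ≤ d ^ 2 ^ (j + 1) := by
      rw [hsq, ih]
      exact Nat.pow_le_pow_left (Nat.log2_self_le (by positivity)) 2
    have hupper : d ^ 2 ^ (j + 1) < (2 ^ (log2PowTwoPow d j + 1)) ^ 2 := by
      rw [hsq, ih]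
      exact Nat.pow_lt_pow_left Nat.lt_log2_self two_ne_zero
    rw [← pow_mul'] at hlower hupper
    rw [eq_comm, Nat.log2_eq_iff (by positivity), log2PowTwoPow, force_eq]
    by_cases h : 2 ^ (2 * log2PowTwoPow d j + 1) ≤ d ^ 2 ^ (j + 1)
    · rw [Nat.ble_eq_true_of_le h, cond_true]
      exact ⟨h, hupper⟩
    · rw [Bool.eq_false_iff.2 (mt Nat.le_of_ble_eq_true h), cond_false]
      exact ⟨hlower, not_le.1 h⟩

/-- The sum `∑ c * (⌊log₂ (d ^ 2 ^ j)⌋ + e)` over the pairs `(d, c)` of `l`. With `e = 0` and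
`e = 1` it bounds `2 ^ j * coeffLogSum l / log 2` from below and from above. -/
def coeffLog2Sum (j e : ℕ) (l : List (ℕ × ℕ)) : ℕ :=
  (l.map fun p => p.2 * (log2PowTwoPow p.1 j + e)).sum

theorem coeffLog2Sum_zero_mul_log_two_le {l : List (ℕ × ℕ)} (hl : ∀ p ∈ l, p.1 ≠ 0) (j : ℕ) :
    coeffLog2Sum j 0 l * Real.log 2 ≤ 2 ^ j * coeffLogSum l := by
  induction l with
  | nil => simp [coeffLog2Sum, coeffLogSum]
  | cons p l ih =>
    simp only [coeffLog2Sum, coeffLogSum, List.map_cons, List.sum_cons] at ih ⊢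
    have hp := mul_le_mul_of_nonneg_left
      (log2_pow_mul_log_two_le (hl p List.mem_cons_self) (2 ^ j)) (Nat.cast_nonneg (α := ℝ) p.2)
    have htail := ih fun q hq => hl q (List.mem_cons_of_mem _ hq)
    rw [log2PowTwoPow_eq (hl p List.mem_cons_self)]
    push_cast at hp htail ⊢
    linarith

theorem le_coeffLog2Sum_one_mul_log_two {l : List (ℕ × ℕ)} (hl : ∀ p ∈ l, p.1 ≠ 0) (j : ℕ) :
    2 ^ j * coeffLogSum l ≤ coeffLog2Sum j 1 l * Real.log 2 := by
  induction l with
  | nil => simp [coeffLog2Sum, coeffLogSum]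
  | cons p l ih =>
    simp only [coeffLog2Sum, coeffLogSum, List.map_cons, List.sum_cons] at ih ⊢
    have hp := mul_le_mul_of_nonneg_left
      (mul_log_le_log2_pow_succ (hl p List.mem_cons_self) (2 ^ j)) (Nat.cast_nonneg (α := ℝ) p.2)
    have htail := ih fun q hq => hl q (List.mem_cons_of_mem _ hq)
    rw [log2PowTwoPow_eq (hl p List.mem_cons_self)]
    push_cast at hp htail ⊢
    linarith

/-- A test for `K + 2 ^ j * coeffLogSum l / log 2 ≤ 2 ^ j * coeffLogSum l' / log 2 + K'` which
also checks that all `d` occurring in the lists are at most `D`. -/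
def logTest (j D K K' : ℕ) (l l' : List (ℕ × ℕ)) : Bool :=
  (l ++ l').all (fun p => Nat.ble p.1 D)
    && Nat.ble (K + coeffLog2Sum j 1 l) (coeffLog2Sum j 0 l' + K')

theorem mul_log_two_le_of_logTest {j D K K' : ℕ} {l l' : List (ℕ × ℕ)}
    (hl : ∀ p ∈ l, p.1 ≠ 0) (hl' : ∀ p ∈ l', p.1 ≠ 0) (h : logTest j D K K' l l' = true) :
    ((K : ℝ) - K') * Real.log 2 ≤ 2 ^ j * (coeffLogSum l' - coeffLogSum l) := by
  simp only [logTest, Bool.and_eq_true, Nat.ble_eq] at h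
  have hcast : ((K + coeffLog2Sum j 1 l : ℕ) : ℝ) ≤ (coeffLog2Sum j 0 l' + K' : ℕ) := by
    exact_mod_cast h.2
  have hmul := mul_le_mul_of_nonneg_right hcast (Real.log_nonneg one_le_two)
  have hupper := le_coeffLog2Sum_one_mul_log_two hl j
  have hlower := coeffLog2Sum_zero_mul_log_two_le hl' j
  push_cast at hmul
  linarith

theorem mul_log_two_add_psiSum_le {w n j D K K' : ℕ} {l U l' U' : List (ℕ × ℕ)}
    (hprofile : profileTest w n l U l' U' = true) (hlog : logTest j D K K' l l' = true)
    {x : ℕ} (hx : D ≤ x) :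
    x * (((K : ℝ) - K') * Real.log 2 / 2 ^ j) + psiSum U x
      ≤ psiSum U' x + (weight l + weight l') * (Real.log x + 1) := by
  have hle := profile_le_profile_of_profileTest hprofile
  have hlarge := hlog
  simp only [profileTest, logTest, Bool.and_eq_true, List.all_eq_true, List.mem_append,
    Nat.ble_eq, Nat.blt_eq, Nat.beq_eq] at hprofile hlarge
  obtain ⟨⟨⟨⟨⟨⟨⟨hl, hU⟩, _⟩, _⟩, _⟩, hc⟩, _⟩, _⟩ := hprofile
  have hlogs := mul_log_two_le_of_logTest (fun p hp => Nat.one_le_iff_ne_zero.1 (hl p (.inl hp)))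
    (fun p hp => Nat.one_le_iff_ne_zero.1 (hl p (.inr hp))) hlog
  have hmain := mul_coeffLogSum_sub_add_psiSum_le (x := x)
    (fun p hp => ⟨hl p (.inl hp), (hlarge.1 p (.inl hp)).trans hx⟩)
    (fun p hp => ⟨hl p (.inr hp), (hlarge.1 p (.inr hp)).trans hx⟩)
    (fun u hu => (hU u (.inl hu)).1) (fun u hu => (hU u (.inr hu)).1) hc hle
  refine le_trans (add_le_add_left (mul_le_mul_of_nonneg_left ?_ (Nat.cast_nonneg x)) _) hmain
  rw [div_le_iff₀ (by positivity)]
  linarith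

theorem chebyshev_profileTest :
    profileTest 30 2002 [(2, 15), (3, 10), (5, 6)] [(1, 30)] [(1, 30), (30, 1)]
      [(6, 30), (2001, 29)] = true := by
  decide +kernel

theorem chebyshev_logTest :
    logTest 16 500 0 2613228 [(2, 15), (3, 10), (5, 6)] [(1, 30), (30, 1)] = true := by
  decide +kernel

/-- The pairs `(d, c)` with `c > 0` of a lower bound certificate for `ψ`. The products `d * c`
approximate `10 ^ 8 * μ d`, since `∑ μ d * ⌊y / d⌋ = 1`; the deviations come from truncating this
sum to `d ≤ 500` and keeping the coefficient sum equal to that of `psiLowerNeg`. -/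
def psiLowerPos : List (ℕ × ℕ) := [
  (1, 99999997), (6, 16666667), (10, 10000000), (14, 7142857), (15, 6666667), (21, 4761905),
  (22, 4545455), (26, 3846154), (33, 3030303), (34, 2941176), (35, 2857143), (38, 2631579),
  (39, 2564103), (46, 2173913), (51, 1960784), (55, 1818182), (57, 1754386), (58, 1724138),
  (62, 1612903), (65, 1538462), (69, 1449275), (74, 1351351), (77, 1298701), (82, 1219512),
  (85, 1176471), (86, 1162791), (87, 1149425), (91, 1098901), (93, 819041), (94, 863524),
  (96, 51492), (106, 943396), (111, 900901), (115, 869565), (118, 847458), (119, 840336),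
  (122, 819672), (123, 813008), (129, 367910), (133, 751880), (134, 746269), (141, 709220),
  (142, 704225), (143, 699301), (145, 659522), (146, 618127), (155, 97281), (156, 133043),
  (158, 632911), (159, 628931), (161, 523186), (162, 97327), (166, 63098), (167, 52271),
  (171, 3552), (177, 408294), (178, 561798), (183, 546448), (185, 540541), (187, 312120),
  (188, 245215), (194, 188699), (196, 156469), (200, 169322), (201, 497512), (202, 129362),
  (203, 492611), (205, 487805), (206, 164803), (209, 437612), (210, 375574), (213, 211775),
  (214, 286134), (215, 317705), (216, 389968), (217, 321304), (218, 237550), (226, 442478),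
  (227, 404613), (233, 235729), (235, 425532), (237, 237360), (247, 206811), (248, 160020),
  (249, 244329), (252, 70517), (253, 103285), (256, 388252), (259, 367363), (265, 377358),
  (267, 109790), (269, 43234), (270, 14770), (272, 265932), (275, 180655), (278, 344904),
  (280, 101303), (285, 3736), (287, 346473), (291, 123383), (292, 35810), (294, 142043),
  (295, 338983), (296, 122622), (298, 129156), (299, 334448), (300, 92239), (301, 136957),
  (303, 330033), (307, 44949), (308, 305302), (312, 146172), (314, 114119), (319, 313480),
  (321, 265172), (326, 271271), (327, 147444), (328, 246820), (330, 300241), (331, 84408),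
  (332, 269656), (333, 3198), (334, 185499), (335, 140219), (336, 168855), (337, 21595),
  (340, 34297), (342, 93766), (343, 135872), (344, 81064), (346, 248681), (348, 59156),
  (350, 96148), (353, 72328), (355, 101723), (358, 279330), (359, 96898), (360, 121734),
  (362, 261707), (363, 14497), (365, 210652), (373, 39723), (375, 14417), (376, 34956),
  (377, 55850), (378, 124620), (380, 77809), (381, 262467), (382, 34094), (386, 259067),
  (387, 135761), (390, 256410), (391, 255754), (393, 157133), (394, 253807), (396, 117537),
  (398, 251256), (404, 247525), (407, 89180), (408, 155460), (411, 38775), (413, 67148),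
  (415, 215725), (416, 28450), (417, 128566), (420, 18385), (421, 6683), (422, 202677),
  (423, 43875), (427, 234192), (433, 165113), (437, 78123), (438, 99583), (439, 68192),
  (441, 59412), (444, 79350), (445, 224719), (446, 39595), (447, 86104), (448, 103866),
  (450, 155902), (451, 32739), (453, 130070), (456, 80400), (458, 30413), (462, 216450),
  (464, 66226), (465, 18818), (469, 213220), (471, 76079), (473, 211416), (475, 210526),
  (476, 2237), (478, 117687), (481, 207900), (482, 207469), (485, 65799), (486, 77205),
  (490, 193732), (492, 39032), (493, 36938), (496, 121603), (497, 199825), (499, 34025),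
  (500, 200000)]

/-- The pairs `(d, -c)` with `c < 0` of the lower bound certificate for `ψ`. -/
def psiLowerNeg : List (ℕ × ℕ) := [
  (2, 50000000), (3, 33333333), (5, 20000000), (7, 14285714), (11, 9090909), (13, 7692308),
  (17, 5882353), (19, 5263158), (23, 4347826), (29, 3448276), (30, 3333333), (31, 3225806),
  (37, 2702703), (41, 2439024), (42, 2380952), (43, 2325581), (47, 2127660), (53, 1886792),
  (59, 1694915), (61, 1639344), (66, 1515152), (67, 1492537), (70, 1428571), (71, 1408451),
  (73, 1369863), (78, 1282051), (79, 1265823), (83, 1204819), (89, 1123596), (95, 11208),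
  (97, 377398), (98, 312938), (100, 338644), (101, 258723), (102, 980392), (103, 329607),
  (105, 952381), (107, 934579), (109, 917431), (110, 909091), (113, 884956), (114, 877193),
  (127, 787402), (130, 659285), (131, 471400), (136, 618115), (137, 116324), (138, 724638),
  (139, 719424), (147, 75460), (148, 245244), (149, 258312), (151, 662252), (154, 649351),
  (157, 228238), (163, 613497), (164, 117095), (165, 606061), (168, 105776), (170, 487277),
  (172, 81143), (173, 497361), (174, 574713), (179, 403732), (181, 552486), (182, 549451),
  (186, 409521), (189, 227762), (190, 150013), (191, 68188), (192, 25746), (193, 518135),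
  (195, 512821), (197, 507614), (199, 502513), (211, 333325), (219, 35309), (220, 14064),
  (222, 450450), (223, 79190), (224, 228507), (225, 311804), (228, 143313), (229, 60827),
  (230, 434783), (231, 432900), (232, 132453), (238, 420168), (239, 235373), (241, 414938),
  (246, 406504), (250, 396855), (251, 133576), (255, 67306), (257, 175077), (258, 183955),
  (260, 36308), (261, 80673), (262, 130304), (263, 227548), (264, 291877), (266, 264785),
  (271, 76199), (273, 323333), (274, 123152), (277, 361011), (279, 1501), (281, 355872),
  (282, 287841), (283, 353357), (286, 349650), (288, 15211), (290, 329761), (293, 341297),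
  (302, 61453), (304, 267191), (305, 44093), (306, 126691), (309, 167760), (310, 48641),
  (313, 144744), (317, 315457), (318, 314465), (322, 310559), (323, 309598), (324, 308642),
  (325, 149604), (329, 295936), (338, 88296), (341, 293255), (349, 78142), (351, 6079),
  (352, 65183), (354, 282486), (356, 207657), (357, 171520), (366, 273224), (367, 209504),
  (370, 270270), (371, 72252), (372, 106680), (374, 140411), (379, 66267), (383, 261097),
  (385, 259740), (395, 42983), (397, 74474), (399, 250627), (400, 44046), (401, 205440),
  (402, 248756), (405, 18759), (406, 246305), (409, 19713), (410, 243902), (412, 115069),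
  (414, 30549), (418, 218806), (419, 109336), (425, 2893), (426, 234742), (428, 38303),
  (429, 233100), (430, 232558), (431, 218174), (432, 196285), (434, 160652), (435, 219841),
  (436, 122115), (440, 43023), (442, 226244), (449, 169525), (452, 18), (454, 202307),
  (455, 110870), (457, 59562), (460, 2809), (461, 214117), (463, 215983), (466, 117865),
  (467, 214133), (468, 44348), (470, 172705), (474, 118680), (479, 208768), (480, 10298),
  (483, 174395), (484, 206612), (487, 99781), (488, 105186), (489, 26442), (494, 125696),
  (495, 160655), (498, 115265)]

/-- The steps `(k, v)` that dominate the excess of `psiLowerPos` over `psiLowerNeg` and `10 ^ 8`. -/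
def psiLowerSteps : List (ℕ × ℕ) := [
  (1, 77), (353, 28695839), (389, 114293587), (427, 33923176), (625, 12516117), (1007, 64843400),
  (1218, 87656308), (1962, 79151709), (4626, 157365662), (14516, 58800029), (28287, 114565099),
  (41415, 71880222), (55123, 53534949), (120001, 11973775287)]

/-- The pairs `(d, c)` with `c > 0` of an upper bound certificate for `ψ`. Here the products
`d * c` approximate `-10 ^ 8 * μ d`. -/
def psiUpperPos : List (ℕ × ℕ) := [
  (2, 50000000), (3, 33333333), (5, 20000000), (7, 14285714), (11, 9090909), (13, 7692308),
  (17, 5882353), (19, 5263158), (23, 4347826), (29, 3448276), (30, 3333333), (31, 3225806),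
  (37, 2702703), (41, 2439024), (42, 2380952), (43, 2325581), (47, 2127660), (53, 1886792),
  (59, 1694915), (61, 1639344), (66, 1515152), (67, 1492537), (70, 1428571), (71, 1408451),
  (73, 1113889), (75, 249148), (78, 1282051), (79, 1265823), (84, 402163), (89, 1123596),
  (97, 1030928), (101, 990099), (102, 980392), (103, 970874), (105, 952381), (107, 344352),
  (108, 158974), (109, 252299), (110, 633252), (111, 8780), (112, 44150), (113, 246793),
  (114, 877193), (116, 443646), (117, 429410), (121, 97542), (127, 787402), (130, 769231),
  (131, 763359), (137, 729927), (138, 246916), (139, 131164), (140, 167708), (149, 671141),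
  (151, 584089), (152, 77649), (154, 649351), (157, 636943), (163, 613497), (165, 606061),
  (167, 439217), (170, 322741), (173, 392567), (174, 574713), (175, 183348), (179, 128921),
  (182, 549451), (186, 437912), (188, 427099), (190, 526316), (191, 466694), (192, 56570),
  (193, 219397), (195, 130546), (198, 249167), (200, 500000), (207, 273408), (208, 17543),
  (211, 473934), (220, 19338), (223, 448430), (227, 440529), (229, 436681), (230, 376887),
  (231, 432900), (233, 278994), (238, 420168), (239, 418410), (240, 49178), (241, 236023),
  (243, 206330), (245, 27528), (246, 376396), (251, 339216), (255, 215161), (257, 69472),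
  (258, 387597), (263, 6627), (264, 9666), (266, 249472), (268, 61662), (269, 211790),
  (270, 10149), (271, 136708), (273, 182267), (279, 66482), (282, 123610), (285, 350877),
  (286, 349650), (289, 29917), (290, 336371), (293, 82943), (297, 170589), (300, 39342),
  (301, 206130), (308, 52591), (309, 5077), (310, 322581), (311, 164660), (312, 7878),
  (315, 129471), (318, 307210), (320, 212935), (322, 281610), (324, 102030), (325, 7863),
  (331, 184476), (337, 296736), (345, 251258), (347, 288184), (349, 235231), (353, 118149),
  (354, 282486), (356, 108067), (357, 280112), (359, 278552), (360, 88089), (362, 39523),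
  (366, 64903), (367, 3919), (368, 151682), (370, 270270), (372, 27552), (373, 61865),
  (374, 44242), (375, 131135), (378, 80383), (379, 150494), (381, 31457), (383, 261097),
  (387, 43755), (388, 250843), (389, 57859), (391, 42540), (397, 194710), (399, 84312),
  (402, 165682), (404, 9719), (405, 113049), (406, 57170), (410, 127008), (411, 185512),
  (412, 925), (414, 22536), (418, 239234), (419, 131614), (421, 135498), (426, 234742),
  (429, 233100), (430, 183525), (431, 232019), (433, 230947), (434, 230415), (435, 65777),
  (437, 22877), (438, 97303), (439, 227790), (441, 2289), (442, 82493), (443, 125886),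
  (444, 101051), (447, 13606), (449, 135281), (455, 219780), (457, 40446), (459, 38349),
  (465, 17848), (467, 23867), (469, 71525), (470, 139907), (474, 210970), (475, 41135),
  (476, 19136), (477, 99676), (483, 155791), (484, 206612), (485, 37710), (487, 43816),
  (488, 108440), (490, 68591), (492, 64910), (493, 4975), (494, 202429), (496, 78505)]

/-- The pairs `(d, -c)` with `c < 0` of the upper bound certificate for `ψ`. -/
def psiUpperNeg : List (ℕ × ℕ) := [
  (1, 100000005), (6, 16666667), (10, 10000000), (14, 7142857), (15, 6666667), (21, 4761905),
  (22, 4545455), (26, 3846154), (33, 3030303), (34, 2941176), (35, 2857143), (38, 2631579),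
  (39, 2564103), (46, 2173913), (51, 1960784), (55, 1818182), (57, 1754386), (58, 1724138),
  (62, 1612903), (65, 1538462), (69, 1449275), (74, 1351351), (77, 1298701), (82, 1219512),
  (85, 645482), (86, 917624), (87, 1149425), (91, 1098901), (93, 1075269), (94, 1063830),
  (95, 1052632), (106, 943396), (115, 753774), (118, 847458), (119, 840336), (120, 98355),
  (122, 819672), (123, 813008), (129, 775194), (133, 751880), (134, 746269), (141, 305250),
  (142, 230599), (143, 699301), (145, 689655), (146, 556945), (150, 124574), (155, 645161),
  (158, 632911), (159, 628931), (161, 621118), (168, 42445), (172, 122583), (177, 564972),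
  (178, 561798), (180, 110607), (181, 79046), (183, 129806), (184, 145934), (185, 540541),
  (194, 515464), (196, 170896), (201, 413580), (202, 401363), (203, 114340), (204, 96016),
  (205, 254015), (206, 411689), (209, 478469), (210, 476190), (213, 469484), (214, 172176),
  (215, 465116), (216, 79487), (217, 460829), (218, 126150), (219, 371296), (221, 334444),
  (222, 4390), (224, 22075), (225, 83049), (226, 123397), (232, 221823), (234, 152353),
  (235, 338706), (237, 421941), (242, 105648), (247, 374872), (252, 75098), (253, 395257),
  (254, 393701), (259, 150342), (262, 381679), (265, 67709), (267, 259314), (274, 278268),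
  (275, 253301), (276, 26169), (277, 3518), (278, 65582), (280, 101514), (283, 11977),
  (284, 224879), (287, 35615), (288, 10745), (291, 343643), (294, 973), (298, 151456),
  (302, 331126), (303, 75417), (304, 25413), (305, 320031), (307, 57872), (314, 318471),
  (317, 137179), (319, 161326), (321, 35992), (323, 14009), (326, 300711), (327, 84100),
  (328, 129677), (329, 174668), (330, 211084), (333, 186294), (334, 219608), (335, 298507),
  (336, 94034), (339, 82264), (341, 293255), (346, 196283), (348, 147882), (350, 40519),
  (351, 143137), (355, 225854), (358, 64460), (363, 32514), (365, 222778), (369, 29942),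
  (371, 221178), (376, 245386), (377, 203684), (380, 124033), (382, 233347), (384, 28285),
  (385, 32966), (386, 113763), (390, 256410), (392, 7220), (393, 71937), (395, 253165),
  (396, 124583), (400, 235078), (401, 202778), (403, 29789), (407, 70582), (408, 171214),
  (413, 119492), (416, 8771), (417, 43721), (420, 33164), (422, 131571), (423, 134657),
  (424, 230408), (425, 43967), (427, 224848), (436, 88555), (440, 157868), (445, 202443),
  (446, 103012), (450, 27957), (451, 65353), (453, 220751), (454, 194267), (456, 25883),
  (458, 78791), (460, 176759), (461, 8966), (462, 98270), (463, 95597), (466, 133574),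
  (468, 36428), (471, 81973), (472, 51083), (478, 209205), (479, 101330), (480, 164584),
  (481, 52582), (482, 205862), (486, 82171), (489, 65281), (495, 82188), (497, 185727),
  (499, 95735), (500, 136258)]

/-- The steps `(k, v)` that dominate the excess of `psiUpperPos` and `10 ^ 8` over `psiUpperNeg`. -/
def psiUpperSteps : List (ℕ × ℕ) := [
  (321, 31530496), (517, 196640909), (916, 11567541), (1784, 126972035), (2158, 56813586),
  (3159, 2372467), (6156, 36633458), (7449, 47942844), (9013, 28551004), (13196, 90572602),
  (14516, 21545201), (19321, 55585741), (23378, 53705555), (120001, 11235853933)]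

theorem psiLower_profileTest :
    profileTest 45 120002 psiLowerPos [] psiLowerNeg ((1, 10 ^ 8) :: psiLowerSteps) = true := by
  decide +kernel

theorem psiLower_logTest :
    logTest 16 500 9412687785431 0 psiLowerPos psiLowerNeg = true := by
  decide +kernel

theorem weight_psiLower_le : weight psiLowerPos + weight psiLowerNeg ≤ 263 * 10 ^ 8 := by
  decide +kernel

theorem psiUpper_profileTest :
    profileTest 45 120002 psiUpperPos [(1, 10 ^ 8)] psiUpperNeg psiUpperSteps = true := by
  decide +kernel

theorem psiUpper_logTest :
    logTest 16 500 0 9504292951547 psiUpperPos psiUpperNeg = true := by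
  decide +kernel

theorem weight_psiUpper_le : weight psiUpperPos + weight psiUpperNeg ≤ 246 * 10 ^ 8 := by
  decide +kernel

/-- A test that `Nat.lcmUpto i ≤ 3 ^ i` for the `k` integers `i` that follow `m`, where
`L = Nat.lcmUpto m`. -/
def lcmUptoTest : ℕ → ℕ → ℕ → Bool
  | 0, _, _ => true
  | k + 1, m, L => force (m + 1) fun m' => force (Nat.lcm L m') fun L' =>
      Nat.ble L' (3 ^ m') && lcmUptoTest k m' L'

theorem lcmUpto_succ (m : ℕ) : Nat.lcmUpto (m + 1) = Nat.lcm (Nat.lcmUpto m) (m + 1) := by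
  unfold Nat.lcmUpto
  rw [← Finset.insert_Icc_right_eq_Icc_add_one (by omega), Finset.lcm_insert, lcm_comm]
  rfl

theorem lcmUpto_le_of_lcmUptoTest {k m : ℕ} (h : lcmUptoTest k m (Nat.lcmUpto m) = true) {i : ℕ}
    (hmi : m < i) (hik : i ≤ m + k) : Nat.lcmUpto i ≤ 3 ^ i := by
  induction k generalizing m with
  | zero => omega
  | succ k ih =>
    rw [lcmUptoTest, force_eq, force_eq, ← lcmUpto_succ, Bool.and_eq_true] at h
    obtain rfl | hlt := (Nat.succ_le_of_lt hmi).eq_or_lt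
    · exact Nat.le_of_ble_eq_true h.1
    · exact ih h.2 hlt (by omega)

theorem lcmUpto_le_three_pow {m : ℕ} (hm : m ≤ 2400) : Nat.lcmUpto m ≤ 3 ^ m := by
  have htest : lcmUptoTest 2400 0 (Nat.lcmUpto 0) = true := by
    rw [show Nat.lcmUpto 0 = 1 by simp [Nat.lcmUpto]]
    decide +kernel
  rcases m.eq_zero_or_pos with rfl | hpos
  · simp [Nat.lcmUpto]
  · exact lcmUpto_le_of_lcmUptoTest htest hpos (by omega)

theorem psi_le_of_le_2400 {m : ℕ} (hm : m ≤ 2400) : Chebyshev.psi m ≤ 1.13 * m := by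
  have hpow : (Nat.lcmUpto m : ℝ) ≤ (3 : ℝ) ^ m := by exact_mod_cast lcmUpto_le_three_pow hm
  have hlog := Real.log_le_log (by exact_mod_cast Nat.lcmUpto_pos m) hpow
  have hthree : Real.log ((3 : ℝ) ^ 5) ≤ Real.log ((2 : ℝ) ^ 8) :=
    Real.log_le_log (by norm_num) (by norm_num)
  rw [← Chebyshev.psi_eq_log_lcmUpto, Real.log_pow] at hlog
  rw [Real.log_pow, Real.log_pow] at hthree
  push_cast at hthree
  have hlog3 : Real.log 3 ≤ 1.13 := by linarith [Real.log_two_lt_d9]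
  nlinarith [(Nat.cast_nonneg m : (0 : ℝ) ≤ m)]

theorem psi_natCast_le (m : ℕ) : Chebyshev.psi m ≤ 1.13 * m := by
  induction m using Nat.strong_induction_on with
  | _ m ih =>
    by_cases hm : m ≤ 2400
    · exact psi_le_of_le_2400 hm
    · have hm' : (2400 : ℝ) < m := by exact_mod_cast not_le.1 hm
      have hcert := mul_log_two_add_psiSum_le chebyshev_profileTest chebyshev_logTest
        (x := m) (by omega)
      simp only [psiSum, weight, List.map_cons, List.map_nil, List.sum_cons, List.sum_nil,
        Nat.div_one] at hcert
      have hdiv (k : ℕ) : ((m / k : ℕ) : ℝ) ≤ m / k := Nat.cast_div_le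
      have h6 := (ih (m / 6) (by omega)).trans (mul_le_mul_of_nonneg_left (hdiv 6) (by norm_num))
      have h2001 := (ih (m / 2001) (by omega)).trans
        (mul_le_mul_of_nonneg_left (hdiv 2001) (by norm_num))
      have htangent := sub_le_mul_log_sub_log (a := (2 : ℝ) ^ 12) (b := m) (by norm_num)
        (by linarith)
      rw [Real.log_pow] at htangent
      have hconst : (m : ℝ) * (2613228 * Real.log 2 / 2 ^ 16) ≤ m * 27.64 :=
        mul_le_mul_of_nonneg_left (by linarith [Real.log_two_lt_d9]) (by linarith)
      push_cast at hcert h6 h2001 htangent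
      linarith [Real.log_two_lt_d9]

theorem psi_le {x : ℝ} (hx : 0 ≤ x) : Chebyshev.psi x ≤ 1.13 * x := by
  rw [Chebyshev.psi_eq_psi_coe_floor]
  exact (psi_natCast_le _).trans
    (mul_le_mul_of_nonneg_left (Nat.floor_le hx) (by norm_num))

theorem psiSum_le (U : List (ℕ × ℕ)) (x : ℕ) :
    psiSum U x ≤ 1.13 * x * (U.map fun u => (u.2 : ℝ) / u.1).sum := by
  induction U with
  | nil => simp [psiSum]
  | cons u U ih =>
    simp only [psiSum, List.map_cons, List.sum_cons] at ih ⊢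
    have hpsi : Chebyshev.psi (x / u.1 : ℕ) ≤ 1.13 * (x / u.1) :=
      (psi_natCast_le _).trans (mul_le_mul_of_nonneg_left Nat.cast_div_le (by norm_num))
    have hmul := mul_le_mul_of_nonneg_left hpsi (Nat.cast_nonneg (α := ℝ) u.2)
    rw [show (u.2 : ℝ) * (1.13 * (x / u.1)) = 1.13 * x * (u.2 / u.1) by ring] at hmul
    linarith

theorem le_psi {x : ℕ} (hx : 500 ≤ x) :
    0.98654 * x - 263 * (Real.log x + 1) ≤ Chebyshev.psi x := by
  have hcert := mul_log_two_add_psiSum_le psiLower_profileTest psiLower_logTest hx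
  have hsteps : psiSum psiLowerSteps x ≤ 1.13 * x * 795970 := by
    refine (psiSum_le _ x).trans (mul_le_mul_of_nonneg_left ?_ (by positivity))
    simp only [psiLowerSteps, List.map_cons, List.map_nil, List.sum_cons, List.sum_nil]
    norm_num
  have hconst : (x : ℝ) * 99554100 ≤ x * (9412687785431 * Real.log 2 / 2 ^ 16) :=
    mul_le_mul_of_nonneg_left (by linarith [Real.log_two_gt_d9]) x.cast_nonneg
  have hweight := mul_le_mul_of_nonneg_right
    (Nat.cast_le (α := ℝ).2 weight_psiLower_le)
    (add_nonneg (Real.log_natCast_nonneg x) zero_le_one)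
  simp only [psiSum, List.map_cons, List.map_nil, List.sum_cons, List.sum_nil, Nat.div_one]
    at hcert hsteps
  push_cast at hcert hweight
  linarith

theorem psi_le_add_log {x : ℕ} (hx : 500 ≤ x) :
    Chebyshev.psi x ≤ 1.01328 * x + 246 * (Real.log x + 1) := by
  have hcert := mul_log_two_add_psiSum_le psiUpper_profileTest psiUpper_logTest hx
  have hsteps : psiSum psiUpperSteps x ≤ 1.13 * x * 712170 := by
    refine (psiSum_le _ x).trans (mul_le_mul_of_nonneg_left ?_ (by positivity))
    simp only [psiUpperSteps, List.map_cons, List.map_nil, List.sum_cons, List.sum_nil]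
    norm_num
  have hconst : (x : ℝ) * (9504292951547 * Real.log 2 / 2 ^ 16) ≤ x * 100522980 :=
    mul_le_mul_of_nonneg_left (by linarith [Real.log_two_lt_d9]) x.cast_nonneg
  have hweight := mul_le_mul_of_nonneg_right
    (Nat.cast_le (α := ℝ).2 weight_psiUpper_le)
    (add_nonneg (Real.log_natCast_nonneg x) zero_le_one)
  simp only [psiSum, List.map_cons, List.map_nil, List.sum_cons, List.sum_nil, Nat.div_one]
    at hcert hsteps
  push_cast at hcert hweight
  linarith

theorem rpow_inv_le_div_pow {s x : ℝ} {k : ℕ} (hs : 0 < s) (h : s ^ (k + 1) ≤ x) :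
    x ^ ((k + 1 : ℕ) : ℝ)⁻¹ ≤ x / s ^ k := by
  have hx : 0 ≤ x := (pow_pos hs _).le.trans h
  have hroot : (x ^ ((k + 1 : ℕ) : ℝ)⁻¹) ^ (k + 1) = x :=
    Real.rpow_inv_natCast_pow hx k.succ_ne_zero
  set r := x ^ ((k + 1 : ℕ) : ℝ)⁻¹
  have hr : 0 ≤ r := Real.rpow_nonneg hx _
  have hsr : s ≤ r := le_of_pow_le_pow_left₀ k.succ_ne_zero hr (hroot ▸ h)
  rw [le_div_iff₀ (by positivity), ← hroot, pow_succ']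
  gcongr

theorem le_theta {x : ℕ} {s t : ℝ} (hx : 500 ≤ x) (hs : 0 < s) (ht : 0 < t) (hsx : s ^ 2 ≤ x)
    (htx : t ^ 3 ≤ x) :
    (0.98654 - 1.13 / s - 2.26 / t ^ 2) * x - 263 * (Real.log x + 1) ≤ Chebyshev.theta x := by
  have hx1 : (1 : ℝ) ≤ x := by exact_mod_cast (by omega : 1 ≤ x)
  have hsqrt := rpow_inv_le_div_pow (k := 1) hs hsx
  have hcbrt := rpow_inv_le_div_pow (k := 2) ht htx
  norm_num only [Nat.cast_ofNat, Nat.reduceAdd, pow_one] at hsqrt hcbrt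
  have hfifth : (x : ℝ) ^ (5 : ℝ)⁻¹ ≤ (x : ℝ) ^ (3 : ℝ)⁻¹ :=
    Real.rpow_le_rpow_of_exponent_le hx1 (by norm_num)
  have hdiff := Chebyshev.psi_sub_theta_le_psi_add_psi_add_psi (x : ℝ)
  have hpsi := le_psi hx
  have hpsi2 := psi_le (Real.rpow_nonneg x.cast_nonneg (2 : ℝ)⁻¹)
  have hpsi3 := psi_le (Real.rpow_nonneg x.cast_nonneg (3 : ℝ)⁻¹)
  have hpsi5 := psi_le (Real.rpow_nonneg x.cast_nonneg (5 : ℝ)⁻¹)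
  calc (0.98654 - 1.13 / s - 2.26 / t ^ 2) * x - 263 * (Real.log x + 1)
      = 0.98654 * x - 263 * (Real.log x + 1) - 1.13 * (x / s) - 2.26 * (x / t ^ 2) := by ring
    _ ≤ Chebyshev.theta x := by linarith

theorem log_1710000_lt : Real.log 1710000 < 14.356 := by
  have h : Real.log ((1710000 : ℝ) ^ 100) ≤ Real.log ((2 : ℝ) ^ 2071) :=
    Real.log_le_log (by positivity)
      (by exact_mod_cast (by decide +kernel : (1710000 : ℕ) ^ 100 ≤ 2 ^ 2071))
  rw [Real.log_pow, Real.log_pow] at h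
  push_cast at h
  linarith [Real.log_two_lt_d9]

theorem lt_log_1710000 : 14.348 < Real.log 1710000 := by
  have h : Real.log ((2 : ℝ) ^ 207) ≤ Real.log ((1710000 : ℝ) ^ 10) :=
    Real.log_le_log (by norm_num) (by norm_num)
  rw [Real.log_pow, Real.log_pow] at h
  push_cast at h
  linarith [Real.log_two_gt_d9]

theorem log_10000000_lt : Real.log 10000000 < 16.2 := by
  have h : Real.log ((10000000 : ℝ) ^ 10) ≤ Real.log ((2 : ℝ) ^ 233) :=
    Real.log_le_log (by norm_num) (by norm_num)
  rw [Real.log_pow, Real.log_pow] at h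
  push_cast at h
  linarith [Real.log_two_lt_d9]

theorem le_theta_of_1710000_le {x : ℕ} (hx : 1710000 ≤ x) : 0.983 * x ≤ Chebyshev.theta x := by
  have hx' : (1710000 : ℝ) ≤ x := by exact_mod_cast hx
  have h := le_theta (x := x) (s := 1307) (t := 119) (by omega) (by norm_num) (by norm_num)
    (by linarith) (by linarith)
  have htangent := sub_le_mul_log_sub_log (a := 1710000) (b := (x : ℝ)) (by norm_num) (by linarith)
  have hlog := log_1710000_lt
  norm_num at h
  linarith

theorem theta_le_add (m : ℕ) : Chebyshev.theta m ≤ 1.01343 * m + 3535 := by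
  have htheta := Chebyshev.theta_le_psi (m : ℝ)
  rcases le_or_gt 500 m with h | h
  · have hm : (500 : ℝ) ≤ m := by exact_mod_cast h
    have hpsi := psi_le_add_log h
    have htangent := sub_le_mul_log_sub_log (a := 1710000) (b := (m : ℝ)) (by norm_num)
      (by linarith)
    have hlog := log_1710000_lt
    linarith
  · have hm : (m : ℝ) < 500 := by exact_mod_cast h
    have hpsi := psi_natCast_le m
    linarith

theorem le_theta_of_10000000_le {x : ℕ} (hx : 10000000 ≤ x) :
    0.98567 * x ≤ Chebyshev.theta x := by
  have hx' : (10000000 : ℝ) ≤ x := by exact_mod_cast hx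
  have h := le_theta (x := x) (s := 3162) (t := 215) (by omega) (by norm_num) (by norm_num)
    (by linarith) (by linarith)
  have htangent := sub_le_mul_log_sub_log (a := 10000000) (b := (x : ℝ)) (by norm_num) (by linarith)
  have hlog := log_10000000_lt
  norm_num at h
  linarith

theorem theta_le_of_10000000_le {x : ℕ} (hx : 10000000 ≤ x) :
    Chebyshev.theta x ≤ 1.0138 * x := by
  have hx' : (10000000 : ℝ) ≤ x := by exact_mod_cast hx
  have htheta := Chebyshev.theta_le_psi (x : ℝ)
  have hpsi := psi_le_add_log (x := x) (by omega)
  have htangent := sub_le_mul_log_sub_log (a := 10000000) (b := (x : ℝ)) (by norm_num) (by linarith)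
  have hlog := log_10000000_lt
  linarith

/-! ### Partial summation -/

theorem mul_sum_le_sum_mul_add {a w : ℕ → ℝ} {b E : ℝ} {n : ℕ} (hE : 0 ≤ E) (hw0 : 0 ≤ w 0)
    (hw : ∀ m < n, w m ≤ w (m + 1)) (ha0 : a 0 = 0)
    (ha : ∀ m < n, ∑ k ∈ Finset.range (m + 1), a k ≤ b * m + E) :
    b * ∑ k ∈ Finset.range n, w (k + 1) ≤ ∑ k ∈ Finset.range (n + 1), a k * w k
      + (b * n + E - ∑ k ∈ Finset.range (n + 1), a k) * w n := by
  induction n with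
  | zero => simpa [ha0] using mul_nonneg hE hw0
  | succ n ih =>
    have ih := ih (fun m hm => hw m (by omega)) (fun m hm => ha m (by omega))
    have hstep := mul_nonneg (sub_nonneg.2 (ha n n.lt_succ_self))
      (sub_nonneg.2 (hw n n.lt_succ_self))
    rw [Finset.sum_range_succ _ n, Finset.sum_range_succ _ (n + 1),
      Finset.sum_range_succ a (n + 1)]
    push_cast
    linarith

section LogWeight

variable {L : ℝ} {n : ℕ}

theorem mul_log_add_one_sub_log_le_one (n : ℕ) :
    n * (Real.log (n + 1 : ℕ) - Real.log n) ≤ 1 := by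
  rcases n.eq_zero_or_pos with rfl | hn
  · simp
  · have h := sub_le_mul_log_sub_log (a := (n : ℝ)) (b := (n + 1 : ℕ)) (by positivity)
      (by positivity)
    push_cast at h ⊢
    linarith

theorem one_le_mul_log_add_one_sub_log (hn : 0 < n) :
    1 ≤ (n + 1) * (Real.log (n + 1 : ℕ) - Real.log n) := by
  have h := sub_le_mul_log_sub_log (a := ((n + 1 : ℕ) : ℝ)) (b := n) (by positivity) (by positivity)
  push_cast at h ⊢
  linarith

theorem logWeight_le_succ (hL : 1 ≤ L) (hn : Real.log (n + 1 : ℕ) ≤ L) :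
    n * (2 * L - Real.log n) ≤ (n + 1 : ℕ) * (2 * L - Real.log (n + 1 : ℕ)) := by
  have h := mul_log_add_one_sub_log_le_one n
  push_cast at h hn ⊢
  linarith

/-- The sum is compared with the integral of `y * (2 * L - log y)`. -/
theorem le_sum_logWeight (hL : 3 / 2 ≤ L) (hn : Real.log n ≤ L) :
    L * n ^ 2 - n ^ 2 * Real.log n / 2 + n ^ 2 / 4
      ≤ ∑ k ∈ Finset.range n, (k + 1 : ℕ) * (2 * L - Real.log (k + 1 : ℕ)) := by
  induction n with
  | zero => simp
  | succ n ih =>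
    have hlog : Real.log n ≤ Real.log (n + 1 : ℕ) := by
      rcases n.eq_zero_or_pos with rfl | hpos
      · simp
      · exact Real.log_le_log (by positivity) (by simp)
    have ih := ih (hlog.trans hn)
    have hsq : (n : ℝ) - 1 ≤ n ^ 2 * (Real.log (n + 1 : ℕ) - Real.log n) := by
      rcases n.eq_zero_or_pos with rfl | hpos
      · simp
      · have h := one_le_mul_log_add_one_sub_log hpos
        have hone : (1 : ℝ) ≤ n := by exact_mod_cast hpos
        nlinarith [mul_le_mul_of_nonneg_left h (sub_nonneg.2 hone)]
    rw [Finset.sum_range_succ]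
    push_cast at ih hsq hn ⊢
    linarith

end LogWeight

theorem theta_eq_sum_range (n : ℕ) : Chebyshev.theta n
    = ∑ k ∈ Finset.range (n + 1), if k.Prime then Real.log k else 0 := by
  rw [Chebyshev.theta_eq_sum_primesLE_log, Nat.primesLE_eq_filter_range, Finset.sum_filter]

theorem sum_log_mul_logWeight_le (L : ℝ) (n : ℕ) :
    ∑ k ∈ Finset.range (n + 1), (if k.Prime then Real.log k else 0) * (k * (2 * L - Real.log k))
      ≤ (∑ p ∈ Nat.primesLE n, (p : ℝ)) * L ^ 2 := by
  rw [Nat.primesLE_eq_filter_range, Finset.sum_filter, Finset.sum_mul]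
  refine Finset.sum_le_sum fun p _ => ?_
  split_ifs
  · have h : Real.log p * (2 * L - Real.log p) ≤ L ^ 2 := by
      nlinarith [sq_nonneg (L - Real.log p)]
    linarith [mul_le_mul_of_nonneg_left h p.cast_nonneg]
  · simp

theorem le_sum_primesLE {x : ℕ} {b E : ℝ} (hx : 3 / 2 ≤ Real.log x) (hb : 0 ≤ b) (hE : 0 ≤ E)
    (htheta : ∀ m : ℕ, Chebyshev.theta m ≤ b * m + E) :
    (Chebyshev.theta x - (b * x + E)) * (x / Real.log x)
        + b * (x ^ 2 / (2 * Real.log x) + x ^ 2 / (4 * Real.log x ^ 2))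
      ≤ ∑ p ∈ Nat.primesLE x, (p : ℝ) := by
  have hmono (m : ℕ) (hm : m < x) : Real.log (m + 1 : ℕ) ≤ Real.log x :=
    Real.log_le_log (by positivity) (by exact_mod_cast hm)
  have habel := mul_sum_le_sum_mul_add (b := b) (n := x)
    (a := fun k => if k.Prime then Real.log k else 0)
    (w := fun k => k * (2 * Real.log x - Real.log k)) hE (by simp)
    (fun m hm => logWeight_le_succ (by linarith) (hmono m hm)) (by simp)
    (fun m _ => theta_eq_sum_range m ▸ htheta m)
  simp only [← theta_eq_sum_range] at habel
  have hweights := mul_le_mul_of_nonneg_left (le_sum_logWeight hx le_rfl) hb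
  have hsum := sum_log_mul_logWeight_le (Real.log x) x
  set L := Real.log x
  have hL : 0 < L := by linarith
  refine le_of_mul_le_mul_right ?_ (pow_pos hL 2)
  calc ((Chebyshev.theta x - (b * x + E)) * (x / L)
        + b * (x ^ 2 / (2 * L) + x ^ 2 / (4 * L ^ 2))) * L ^ 2
      = (Chebyshev.theta x - (b * x + E)) * (x * L) + b * (x ^ 2 * L / 2 + x ^ 2 / 4) := by
        field_simp
    _ ≤ (∑ p ∈ Nat.primesLE x, (p : ℝ)) * L ^ 2 := by linarith

theorem lt_log_of_1710000_le {x : ℝ} (hx : 1710000 ≤ x) : 14.348 < Real.log x :=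
  lt_log_1710000.trans_le (Real.log_le_log (by norm_num) hx)

theorem mul_log_le_of_1710000_le {x : ℝ} (hx : 1710000 ≤ x) : 50000 * Real.log x ≤ x := by
  have htangent := sub_le_mul_log_sub_log (a := 1710000) (b := x) (by norm_num) (by linarith)
  linarith [log_1710000_lt]

theorem le_sum_primesLE_of_1710000_le {x : ℕ} (hx : 1710000 ≤ x) :
    x ^ 2 / (2 * Real.log x) * (0.9483 + 1 / (2 * Real.log x)) ≤ ∑ p ∈ Nat.primesLE x, (p : ℝ) := by
  have hx' : (1710000 : ℝ) ≤ x := by exact_mod_cast hx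
  have hlog := lt_log_of_1710000_le hx'
  have hsum := le_sum_primesLE (b := 1.01343) (E := 3535) (x := x) (by linarith) (by norm_num)
    (by norm_num) theta_le_add
  refine le_trans ?_ hsum
  have htheta := le_theta_of_1710000_le hx
  set L := Real.log x
  have : 0 < L := by linarith
  have hxL : 0 ≤ x / L := by positivity
  have hfirst : (-0.03251 * x) * (x / L) ≤ (Chebyshev.theta x - (1.01343 * x + 3535)) * (x / L) :=
    mul_le_mul_of_nonneg_right (by linarith) hxL
  have hsq : (0 : ℝ) ≤ x ^ 2 / (4 * L ^ 2) := by positivity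
  calc x ^ 2 / (2 * L) * (0.9483 + 1 / (2 * L))
      = 0.47415 * x * (x / L) + x ^ 2 / (4 * L ^ 2) := by field_simp; ring
    _ ≤ -0.03251 * x * (x / L) + 1.01343 * (x * (x / L) / 2) + 1.01343 * (x ^ 2 / (4 * L ^ 2)) := by
        nlinarith [mul_nonneg (Nat.cast_nonneg (α := ℝ) x) hxL]
    _ = -0.03251 * x * (x / L) + 1.01343 * (x ^ 2 / (2 * L) + x ^ 2 / (4 * L ^ 2)) := by ring
    _ ≤ _ := by linarith

theorem le_log_of_sq_div_log_le {x y : ℝ} (hx : 0 < x) (hlog : 0 < Real.log x)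
    (h : x ^ 2 / (2 * Real.log x) * 0.948 ≤ y) : 31 / 16 * Real.log x - 2.521 ≤ Real.log y := by
  have hmono := Real.log_le_log (by positivity) h
  rw [Real.log_mul (by positivity) (by norm_num), Real.log_div (by positivity) (by positivity),
    Real.log_pow] at hmono
  have htangent := sub_le_mul_log_sub_log (a := 2 ^ 5) (b := 2 * Real.log x) (by norm_num)
    (by positivity)
  rw [Real.log_pow] at htangent
  have hconst := Real.one_sub_inv_le_log_of_pos (show (0 : ℝ) < 0.948 by norm_num)
  norm_num at hconst htangent hmono
  linarith [Real.log_two_lt_d9]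

theorem sq_le_mul_log {x y : ℝ} (hx : 0 < x) (hlog : 14.348 < Real.log x)
    (h : x ^ 2 / (2 * Real.log x) * (0.948 + 1 / (2 * Real.log x)) ≤ y) :
    0.86 * x ^ 2 ≤ y * Real.log y := by
  have hL : 0 < Real.log x := by linarith
  have hy := le_log_of_sq_div_log_le hx hL <|
    (mul_le_mul_of_nonneg_left (le_add_of_nonneg_right (by positivity)) (by positivity)).trans h
  set L := Real.log x
  set w := 1 / (2 * L)
  have hw : w ≤ 0.03485 := by
    rw [div_le_iff₀ (by positivity)]
    linarith
  have hw0 : 0 < w := by positivity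
  calc 0.86 * x ^ 2 ≤ (0.948 + w) * (31 / 32 - 2.521 * w) * x ^ 2 :=
        mul_le_mul_of_nonneg_right (by nlinarith) (sq_nonneg x)
    _ = x ^ 2 / (2 * L) * (0.948 + w) * (31 / 16 * L - 2.521) := by
        simp only [w]
        field_simp
        ring
    _ ≤ y * Real.log y :=
        mul_le_mul h hy (by linarith) (le_trans (by positivity) h)

theorem good_of_sum_primesLE_le {P n : ℕ} (hP : 2004328 ≤ P)
    (h : ∑ p ∈ Nat.primesLE (171 * P / 200), p ≤ n + P) : Good P n := by
  obtain ⟨x, hx⟩ : ∃ x, 171 * P / 200 = x := ⟨_, rfl⟩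
  rw [hx] at h
  have hx1 : 1710000 ≤ x := by omega
  have hx' : (1710000 : ℝ) ≤ x := by exact_mod_cast hx1
  have hPx : 171 * (P : ℝ) ≤ 200 * x + 200 := by exact_mod_cast (by omega)
  have hsum : ∑ p ∈ Nat.primesLE x, (p : ℝ) ≤ n + P := by
    rw [← Nat.cast_sum, ← Nat.cast_add]
    exact Nat.cast_le.2 h
  have hlog := lt_log_of_1710000_le hx'
  have hPsmall : (P : ℝ) ≤ 0.0003 * (x ^ 2 / (2 * Real.log x)) := by
    have hratio : 25000 ≤ x / (2 * Real.log x) := by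
      rw [le_div_iff₀ (by linarith)]
      linarith [mul_log_le_of_1710000_le hx']
    rw [pow_two, mul_div_assoc]
    nlinarith
  have hn : x ^ 2 / (2 * Real.log x) * (0.948 + 1 / (2 * Real.log x)) ≤ (n : ℝ) := by
    linarith [le_sum_primesLE_of_1710000_le hx1]
  have hmul := sq_le_mul_log (by linarith) hlog hn
  have hsq : (P : ℝ) ^ 2 ≤ (1.16962 * x) ^ 2 := by
    gcongr
    linarith
  have hlog215 : 215 * Real.log 215 ≤ 1154.9 := by linarith [log_215_lt, Real.log_two_lt_d9]
  have hpos : (0 : ℝ) < x ^ 2 := by positivity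
  calc (P : ℝ) ^ 2 * (215 * Real.log 215) ≤ (1.16962 * x) ^ 2 * 1154.9 :=
        mul_le_mul hsq hlog215 (by positivity) (by positivity)
    _ < 43 ^ 2 * (0.86 * x ^ 2) := by linarith
    _ ≤ 43 ^ 2 * (n * Real.log n) := mul_le_mul_of_nonneg_left hmul (by norm_num)

/-! ### Primes in short intervals and the large range -/

/-- A test that consecutive entries of the list `a :: l` are close enough for `l` to meet each
interval `[x, 1.029 * x]` with `a < x` and `2 * 10 ^ 5 ≤ x ≤ 10 ^ 7`. -/
def ratioTest : ℕ → List ℕ → Bool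
  | a, [] => Nat.ble 10000000 a
  | a, p :: l => (Nat.blt p 200000 || Nat.ble (1000 * p) (1029 * (a + 1))) && ratioTest p l

theorem exists_mem_of_ratioTest {a x : ℕ} {l : List ℕ} (h : ratioTest a l = true) (hax : a < x)
    (hlo : 200000 ≤ x) (hhi : x ≤ 10000000) : ∃ p ∈ l, x ≤ p ∧ 1000 * p ≤ 1029 * x := by
  induction l generalizing a with
  | nil =>
    rw [ratioTest, Nat.ble_eq] at h
    omega
  | cons p l ih =>
    rw [ratioTest, Bool.and_eq_true, Bool.or_eq_true, Nat.blt_eq, Nat.ble_eq] at h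
    rcases lt_or_ge p x with hpx | hpx
    · obtain ⟨q, hq, hspec⟩ := ih h.2 hpx
      exact ⟨q, List.mem_cons_of_mem _ hq, hspec⟩
    · exact ⟨p, List.mem_cons_self, hpx, by omega⟩

theorem exists_prime_of_theta_lt {x y : ℕ} (h : Chebyshev.theta x < Chebyshev.theta y) :
    ∃ p, p.Prime ∧ x < p ∧ p ≤ y := by
  by_contra! hnone
  refine h.not_ge ?_
  rw [Chebyshev.theta_eq_sum_primesLE_log, Chebyshev.theta_eq_sum_primesLE_log]
  refine Finset.sum_le_sum_of_subset_of_nonneg (fun p hp => ?_)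
    fun p _ _ => Real.log_natCast_nonneg p
  obtain ⟨hpy, hp⟩ := Nat.mem_primesLE.1 hp
  exact Nat.mem_primesLE.2 ⟨not_lt.1 fun hxp => (hnone p hp hxp).not_ge hpy, hp⟩

theorem exists_prime_mul_le {x : ℕ} (hx : 200000 ≤ x) :
    ∃ p, p.Prime ∧ x ≤ p ∧ 1000 * p ≤ 1029 * x := by
  rcases le_or_gt x 10000000 with hsmall | hlarge
  · have htest : ratioTest 0 exchangeChain = true := by decide +kernel
    obtain ⟨p, hp, hspec⟩ := exists_mem_of_ratioTest htest (by omega) hx hsmall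
    exact ⟨p, prime_of_mem_exchangeChain hp, hspec⟩
  · obtain ⟨y, hy⟩ : ∃ y, 1029 * x / 1000 = y := ⟨_, rfl⟩
    have hyx : 1029 * (x : ℝ) ≤ 1000 * y + 1000 := by exact_mod_cast (by omega)
    have hx' : (10000000 : ℝ) < x := by exact_mod_cast hlarge
    obtain ⟨p, hp, hxp, hpy⟩ := exists_prime_of_theta_lt (x := x) (y := y) <| by
      linarith [theta_le_of_10000000_le hlarge.le, le_theta_of_10000000_le (x := y) (by omega)]
    exact ⟨p, hp, hxp.le, by omega⟩

theorem sum_primesLE_le_add (P t : ℕ) :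
    ∑ p ∈ Nat.primesLE t, p ≤ ∑ p ∈ primesAboveSqrt P t, p + P := by
  rw [← Finset.sum_filter_add_sum_filter_not (Nat.primesLE t) fun p => P < p ^ 2,
    Nat.primesLE_eq_filter_range, Finset.filter_filter, primesAboveSqrt]
  refine Nat.add_le_add_left ?_ _
  have hsub : ((Finset.range (t + 1)).filter Nat.Prime).filter (fun p => ¬P < p ^ 2)
      ⊆ Finset.Icc 1 (Nat.sqrt P) := fun p hp => by
    simp only [Finset.mem_filter, not_lt] at hp
    exact Finset.mem_Icc.2 ⟨hp.1.2.pos, Nat.le_sqrt'.2 hp.2⟩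
  calc _ ≤ ∑ p ∈ Finset.Icc 1 (Nat.sqrt P), p := Finset.sum_le_sum_of_subset hsub
    _ ≤ (Finset.Icc 1 (Nat.sqrt P)).card • Nat.sqrt P :=
        Finset.sum_le_card_nsmul _ _ _ fun p hp => (Finset.mem_Icc.1 hp).2
    _ = Nat.sqrt P * Nat.sqrt P := by rw [Nat.card_Icc, Nat.add_sub_cancel, smul_eq_mul]
    _ ≤ P := Nat.sqrt_le P

theorem mul_add_sq_lt_of_mul_le {P T p x y : ℕ} (hP : 2004328 ≤ P) (hT : 200 * T ≤ 171 * P)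
    (hT' : 171 * P < 200 * T + 200) (hy : y + P ≤ 2 * T) (hp : 1000 * p ≤ 1029 * y)
    (hxy : x = y ∨ 10 * y ≤ P + 10) : p * P + T * T < T * (P + x) := by
  obtain ⟨D, rfl⟩ : ∃ D, P = T + D := ⟨P - T, by omega⟩
  have hprod := Nat.mul_le_mul (by omega : 171 * (T + D) ≤ 200 * T + 200)
    (by omega : 200 * x + 29 * (T + D) ≤ 200 * x + 200 * D)
  have hpP := Nat.mul_le_mul_right (T + D) hp
  have hPP := Nat.mul_le_mul_right (T + D) hP
  have hyP := Nat.mul_le_mul_right (T + D) (by omega : 200 * y ≤ 142 * (T + D))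
  rcases hxy with rfl | hxy
  · nlinarith
  · nlinarith [Nat.mul_le_mul_right (T + D) hxy]

theorem exchangeable_of_le {P : ℕ} (hP : 2004328 ≤ P) : Exchangeable P (171 * P / 200) := by
  intro q₁ q₂ _ _ hlt _ hqT hsum
  obtain ⟨T, hT⟩ : ∃ T, 171 * P / 200 = T := ⟨_, rfl⟩
  rw [hT] at hqT
  obtain ⟨p, hp, hyp, hpy⟩ := exists_prime_mul_le (x := max (q₁ + q₂ - P) (P / 10 + 1)) (by omega)
  refine ⟨p, hp, ?_, by omega, ?_⟩
  · have hPp : P < 10 * p := by omega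
    nlinarith
  · have hmul := mul_add_sq_lt_of_mul_le (x := q₁ + q₂ - P) (T := T) hP (by omega) (by omega)
      (by omega) hpy (by omega)
    rw [Nat.add_sub_cancel' hsum.le] at hmul
    have hle := mul_add_le_mul_add_sq (hlt.le.trans hqT) hqT
    omega

theorem good_of_dvd_landau_of_le {P n : ℕ} (hP : P.Prime) (hPN : P ∣ landau n)
    (hlo : 2004328 ≤ P) : Good P n :=
  good_of_sum_primesLE_le hlo <| (sum_primesLE_le_add P _).trans <|
    Nat.add_le_add_right ((exchangeable_of_le hlo).sum_primesAboveSqrt_le hP hPN (by omega)) P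

theorem good_or_eq_of_maxPrimeFac_landau {n : ℕ} (hn : 4 ≤ n) :
    Good (maxPrimeFac (landau n)) n ∨ maxPrimeFac (landau n) = 43 ∧ n = 215 := by
  have hN : 2 ≤ landau n := le_landau two_ne_zero ((ell_le_self two_ne_zero).trans (by omega))
  have hP := maxPrimeFac_prime hN
  have hPN := maxPrimeFac_dvd hN
  rcases lt_or_ge (maxPrimeFac (landau n)) 468 with h | h468
  · exact good_or_eq_of_lt_468 hP h hn rfl
  rcases lt_or_ge (maxPrimeFac (landau n)) 2000 with h | h2000
  · exact Or.inl (good_of_dvd_landau_of_lt_2000 hP hPN h468 h)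
  rcases lt_or_ge (maxPrimeFac (landau n)) 2004328 with h | h2004328
  · exact Or.inl (good_of_dvd_landau_of_lt_2004328 hP hPN h2000 h)
  · exact Or.inl (good_of_dvd_landau_of_le hP hPN h2004328)

theorem Good.mul_sqrt_lt {P n : ℕ} (h : Good P n) :
    (P : ℝ) * Real.sqrt (215 * Real.log 215) < 43 * Real.sqrt (n * Real.log n) := by
  refine lt_of_pow_lt_pow_left₀ 2 (by positivity) ?_
  rw [mul_pow, mul_pow, Real.sq_sqrt (by positivity),
    Real.sq_sqrt (mul_nonneg n.cast_nonneg (Real.log_natCast_nonneg n))]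
  exact h

/-- For every n ≥ 4, P⁺(g(n))/√(n log n) ≤ 43/√(215 log 215); the maximum is
attained only at n = 215, where P⁺(g(215)) = 43. -/
theorem stmt0 :
    (∀ n : ℕ, 4 ≤ n →
      (maxPrimeFac (landau n) : ℝ) * Real.sqrt (215 * Real.log 215) ≤
        43 * Real.sqrt (n * Real.log n)) ∧
    maxPrimeFac (landau 215) = 43 ∧
    (∀ n : ℕ, 4 ≤ n →
      (maxPrimeFac (landau n) : ℝ) * Real.sqrt (215 * Real.log 215) =
        43 * Real.sqrt (n * Real.log n) → n = 215) := by
  refine ⟨fun n hn => ?_, ?_, fun n hn heq => ?_⟩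
  · rcases good_or_eq_of_maxPrimeFac_landau hn with hgood | ⟨hP, rfl⟩
    · exact hgood.mul_sqrt_lt.le
    · rw [hP]
      norm_num
  · rcases good_or_eq_of_maxPrimeFac_landau (n := 215) (by norm_num) with hgood | ⟨hP, -⟩
    · have hle := mul_le_mul_of_nonneg_right
        (Nat.cast_le (α := ℝ).2 le_maxPrimeFac_landau_215) (Real.sqrt_nonneg (215 * Real.log 215))
      have hlt := hgood.mul_sqrt_lt
      push_cast at hle hlt
      exact absurd hlt hle.not_gt
    · exact hP
  · rcases good_or_eq_of_maxPrimeFac_landau hn with hgood | ⟨-, hn215⟩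
    · exact absurd heq hgood.mul_sqrt_lt.ne
    · exact hn215
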